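/- arXiv:2507.17060 — 11 statements merged into one kernel-verified Lean document; each statement's English description precedes it below -/
import Mathlib

section
/- Let X be a connected, locally compact, locally connected Hausdorff topological space and let C ⊆ X be a compact subset. Then the union of C with all bounded connected components of X \ C is compact, and X \ C has only finitely many unbounded connected components. -/
open Set in
/-- If `X` is a connected, locally compact, locally connected Hausdorff
space and `C ⊆ X` is compact, then `C` together with all bounded components of `X \ C`
is compact, and `X \ C` has only finitely many unbounded components.  Here a set is
bounded when its closure is compact, and the components of `X \ C` are the sets
`connectedComponentIn Cᶜ x` for `x ∈ Cᶜ`. -/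
theorem stmt0 {X : Type*} [TopologicalSpace X] [ConnectedSpace X]
    [LocallyCompactSpace X] [LocallyConnectedSpace X] [T2Space X]
    {C : Set X} (hC : IsCompact C) :
    IsCompact (C ∪ ⋃₀ {K : Set X | (∃ x ∈ Cᶜ, K = connectedComponentIn Cᶜ x) ∧
        IsCompact (closure K)}) ∧
    {K : Set X | (∃ x ∈ Cᶜ, K = connectedComponentIn Cᶜ x) ∧
        ¬ IsCompact (closure K)}.Finite := by
  classical
  rcases C.eq_empty_or_nonempty with rfl | hne
  · have hu : ∀ x : X, connectedComponentIn (∅ᶜ : Set X) x = univ := by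
      intro x
      rw [compl_empty, connectedComponentIn_univ]
      exact PreconnectedSpace.connectedComponent_eq_univ x
    simp only [hu]
    constructor
    · by_cases h : IsCompact (univ : Set X)
      · have h' : CompactSpace X := ⟨h⟩
        rw [empty_union]
        have : IsClosed (⋃₀ {K : Set X | (∃ x ∈ (∅ᶜ : Set X), K = univ) ∧
            IsCompact (closure K)}) := by
          convert isClosed_univ
          rw [eq_univ_iff_forall]
          intro x
          exact ⟨univ, ⟨⟨x, by simp, rfl⟩, by simpa using h⟩, mem_univ x⟩
        exact this.isCompact
      · convert isCompact_empty
        rw [empty_union, sUnion_eq_empty]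
        rintro K ⟨⟨x, _, rfl⟩, hK⟩
        exact absurd (by simpa using hK) h
    · refine (finite_singleton (univ : Set X)).subset ?_
      rintro K ⟨⟨x, _, rfl⟩, _⟩
      rfl
  obtain ⟨L, hL, hCL⟩ := exists_compact_superset hC
  have hopen : ∀ x, IsOpen (connectedComponentIn Cᶜ x) := fun x =>
    hC.isClosed.isOpen_compl.connectedComponentIn
  have hF : IsCompact (L \ interior L) := hL.diff isOpen_interior
  have hFC : ∀ z ∈ L \ interior L, z ∈ Cᶜ := fun z hz h => hz.2 (hCL h)
  obtain ⟨t, ht⟩ := hF.elim_finite_subcover (fun x => connectedComponentIn Cᶜ x) hopen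
    (fun z hz => mem_iUnion.2 ⟨z, mem_connectedComponentIn (hFC z hz)⟩)
  have key : ∀ y ∈ Cᶜ, connectedComponentIn Cᶜ y ⊆ L ∨
      ∃ x ∈ t, connectedComponentIn Cᶜ y = connectedComponentIn Cᶜ x := by
    intro y hy
    by_cases hd : ∃ z ∈ connectedComponentIn Cᶜ y, z ∈ L \ interior L
    · right
      obtain ⟨z, hzy, hz⟩ := hd
      obtain ⟨x, hx, hzx⟩ := mem_iUnion₂.1 (ht hz)
      exact ⟨x, hx, (connectedComponentIn_eq hzy).trans (connectedComponentIn_eq hzx).symm⟩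
    · left
      push Not at hd
      have hpre : IsPreconnected (connectedComponentIn Cᶜ y) :=
        isPreconnected_connectedComponentIn
      have hcov : connectedComponentIn Cᶜ y ⊆ interior L ∪ Lᶜ := by
        intro z hz
        by_cases h1 : z ∈ L
        · left
          by_contra h2
          exact hd z hz ⟨h1, h2⟩
        · exact Or.inr h1
      have hdis : Disjoint (interior L) Lᶜ :=
        disjoint_compl_right.mono_left interior_subset
      rcases hpre.subset_or_subset isOpen_interior hL.isClosed.isOpen_compl hdis hcov with h | h
      · exact h.trans interior_subset
      · exfalso
        have hcl : closure (connectedComponentIn Cᶜ y) ⊆ Cᶜ := by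
          intro z hz hzC
          have h1 : z ∈ closure Lᶜ := closure_mono h hz
          rw [closure_compl] at h1
          exact h1 (hCL hzC)
        have hclosed : IsClosed (connectedComponentIn Cᶜ y) := by
          apply isClosed_of_closure_subset
          exact hpre.closure.subset_connectedComponentIn
            (subset_closure (mem_connectedComponentIn hy)) hcl
        have huniv := IsClopen.eq_univ ⟨hclosed, hopen y⟩ ⟨y, mem_connectedComponentIn hy⟩
        obtain ⟨c, hc⟩ := hne
        have : c ∈ connectedComponentIn Cᶜ y := huniv ▸ mem_univ c
        exact connectedComponentIn_subset _ _ this hc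
  constructor
  · have hbig : IsCompact (L ∪ ⋃ x ∈ t.filter
        (fun x => IsCompact (closure (connectedComponentIn Cᶜ x))),
        closure (connectedComponentIn Cᶜ x)) := by
      refine hL.union (Finset.isCompact_biUnion _ ?_)
      intro x hx
      exact (Finset.mem_filter.1 hx).2
    refine hbig.of_isClosed_subset ?_ ?_
    · rw [← isOpen_compl_iff, isOpen_iff_mem_nhds]
      intro y hy
      have hyC : y ∈ Cᶜ := fun h => hy (Or.inl h)
      refine Filter.mem_of_superset ((hopen y).mem_nhds (mem_connectedComponentIn hyC)) ?_
      rintro z hz (hzC | ⟨K, ⟨⟨x, hx, rfl⟩, hK⟩, hzK⟩)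
      · exact connectedComponentIn_subset _ _ hz hzC
      · refine hy (Or.inr ⟨_, ⟨⟨x, hx, rfl⟩, hK⟩, ?_⟩)
        rw [connectedComponentIn_eq hzK, ← connectedComponentIn_eq hz]
        exact mem_connectedComponentIn hyC
    · rintro z (hz | ⟨K, ⟨⟨y, hy, rfl⟩, hK⟩, hzK⟩)
      · exact Or.inl (interior_subset (hCL hz))
      · rcases key y hy with h | ⟨x, hx, hxy⟩
        · exact Or.inl (h hzK)
        · right
          rw [hxy] at hK hzK
          exact mem_iUnion₂.2 ⟨x, Finset.mem_filter.2 ⟨hx, hK⟩, subset_closure hzK⟩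
  · refine (t.finite_toSet.image (fun x => connectedComponentIn Cᶜ x)).subset ?_
    rintro K ⟨⟨y, hy, rfl⟩, hK⟩
    rcases key y hy with h | ⟨x, hx, hxy⟩
    · exact absurd (hL.of_isClosed_subset isClosed_closure
        (hL.isClosed.closure_subset_iff.2 h)) hK
    · exact ⟨x, hx, hxy.symm⟩
end

section
/- Let X be a connected, locally compact, locally connected Hausdorff space, and let a group G act on X by homeomorphisms (each element acts as a homeomorphism of X) such that for every compact set C ⊆ X there exists g ∈ G with (g • C) ∩ C = ∅. If n ≥ 3 and there is a compact set C ⊆ X such that X \ C has at least n distinct unbounded connected components, then there is a compact set D ⊆ X such that X \ D has at least n + 1 distinct unbounded connected components. (Consequently such a space X has 0, 1, 2 or infinitely many ends.) -/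
open Pointwise

section EndsHelpers
open Set Topology

/-- Unbounded component of the complement of `D`. -/
def IsUC {X : Type*} [TopologicalSpace X] (D A : Set X) : Prop :=
  (∃ x ∈ Dᶜ, A = connectedComponentIn Dᶜ x) ∧ ¬ IsCompact (closure A)

theorem exists_compact_conn_nhd {X : Type*} [TopologicalSpace X]
    [LocallyCompactSpace X] [LocallyConnectedSpace X] [T2Space X] (x : X) :
    ∃ N ∈ 𝓝 x, IsCompact N ∧ IsPreconnected N := by
  obtain ⟨L, hL, hxL⟩ := exists_compact_mem_nhds x
  have hV : connectedComponentIn (interior L) x ⊆ L :=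
    (connectedComponentIn_subset _ _).trans interior_subset
  refine ⟨closure (connectedComponentIn (interior L) x), ?_, ?_, ?_⟩
  · refine Filter.mem_of_superset ?_ subset_closure
    exact isOpen_interior.connectedComponentIn.mem_nhds
      (mem_connectedComponentIn (mem_interior_iff_mem_nhds.2 hxL))
  · exact hL.of_isClosed_subset isClosed_closure (closure_minimal hV hL.isClosed)
  · exact isPreconnected_connectedComponentIn.closure

theorem exists_compact_conn_pair {X : Type*} [TopologicalSpace X] [ConnectedSpace X]
    [LocallyCompactSpace X] [LocallyConnectedSpace X] [T2Space X] (x₀ x : X) :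
    ∃ K, IsCompact K ∧ IsPreconnected K ∧ x₀ ∈ K ∧ x ∈ K := by
  let S : Set X := {x | ∃ K, IsCompact K ∧ IsPreconnected K ∧ x₀ ∈ K ∧ x ∈ K}
  have key : ∀ N, IsCompact N → IsPreconnected N → ∀ y ∈ N, ∀ z ∈ N, y ∈ S → z ∈ S := by
    rintro N hN hN' y hy z hz ⟨K, h1, h2, h3, h4⟩
    exact ⟨K ∪ N, h1.union hN, h2.union y h4 hy hN', Or.inl h3, Or.inr hz⟩
  have hop : IsOpen S := by
    rw [isOpen_iff_mem_nhds]
    intro y hy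
    obtain ⟨N, hN, h1, h2⟩ := exists_compact_conn_nhd y
    exact Filter.mem_of_superset hN fun z hz => key N h1 h2 y (mem_of_mem_nhds hN) z hz hy
  have hcl : IsOpen Sᶜ := by
    rw [isOpen_iff_mem_nhds]
    intro y hy
    obtain ⟨N, hN, h1, h2⟩ := exists_compact_conn_nhd y
    exact Filter.mem_of_superset hN fun z hz hzS =>
      hy (key N h1 h2 z hz y (mem_of_mem_nhds hN) hzS)
  have : S = univ := IsClopen.eq_univ ⟨⟨hcl⟩, hop⟩
    ⟨x₀, {x₀}, isCompact_singleton, isPreconnected_singleton, rfl, rfl⟩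
  exact (this ▸ mem_univ x : x ∈ S)

theorem exists_compact_conn_superset {X : Type*} [TopologicalSpace X] [ConnectedSpace X]
    [LocallyCompactSpace X] [LocallyConnectedSpace X] [T2Space X] {C : Set X} (hC : IsCompact C) :
    ∃ K, IsCompact K ∧ IsPreconnected K ∧ K.Nonempty ∧ C ⊆ K := by
  obtain ⟨x₀⟩ : Nonempty X := inferInstance
  suffices h : ∃ K, IsCompact K ∧ IsPreconnected K ∧ x₀ ∈ K ∧ C ⊆ K by
    obtain ⟨K, h1, h2, h3, h4⟩ := h
    exact ⟨K, h1, h2, ⟨_, h3⟩, h4⟩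
  refine hC.induction_on (p := fun C => ∃ K, IsCompact K ∧ IsPreconnected K ∧ x₀ ∈ K ∧ C ⊆ K)
    ?_ ?_ ?_ ?_
  · exact ⟨{x₀}, isCompact_singleton, isPreconnected_singleton, rfl, empty_subset _⟩
  · rintro s t hst ⟨K, h1, h2, h3, h4⟩
    exact ⟨K, h1, h2, h3, hst.trans h4⟩
  · rintro s t ⟨K, h1, h2, h3, h4⟩ ⟨K', h1', h2', h3', h4'⟩
    exact ⟨K ∪ K', h1.union h1', h2.union x₀ h3 h3' h2', Or.inl h3, union_subset_union h4 h4'⟩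
  · intro x _
    obtain ⟨N, hN, h1, h2⟩ := exists_compact_conn_nhd x
    obtain ⟨K, k1, k2, k3, k4⟩ := exists_compact_conn_pair x₀ x
    exact ⟨N, mem_nhdsWithin_of_mem_nhds hN, K ∪ N, k1.union h1,
      k2.union x k4 (mem_of_mem_nhds hN) h2, Or.inl k3, subset_union_right⟩

theorem closure_comp_subset {X : Type*} [TopologicalSpace X] (D : Set X) (x : X) :
    closure (connectedComponentIn Dᶜ x) ⊆ connectedComponentIn Dᶜ x ∪ D := by
  intro y hy
  by_cases hyD : y ∈ D
  · exact Or.inr hyD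
  left
  by_cases hx : x ∈ Dᶜ
  · have h1 : IsPreconnected (insert y (connectedComponentIn Dᶜ x)) :=
      isPreconnected_connectedComponentIn.subset_closure (subset_insert _ _)
        (insert_subset hy subset_closure)
    exact h1.subset_connectedComponentIn (mem_insert_of_mem _ (mem_connectedComponentIn hx))
      (insert_subset hyD (connectedComponentIn_subset _ _)) (mem_insert _ _)
  · simp [connectedComponentIn_eq_empty hx] at hy

theorem exists_UC_subset {X : Type*} [TopologicalSpace X] [ConnectedSpace X]
    [LocallyCompactSpace X] [LocallyConnectedSpace X] [T2Space X] {C K U : Set X}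
    (hK : IsCompact K) (hKne : K.Nonempty) (hCK : C ⊆ K) (hU : IsUC C U) :
    ∃ V, IsUC K V ∧ V ⊆ U := by
  obtain ⟨⟨u, hu, rfl⟩, hunb⟩ := hU
  by_contra hcon
  apply hunb
  obtain ⟨L, hL, hKL⟩ := exists_compact_superset hK
  have hsub : ∀ p ∈ connectedComponentIn Cᶜ u,
      connectedComponentIn Kᶜ p ⊆ connectedComponentIn Cᶜ u := by
    intro p hp
    rw [connectedComponentIn_eq hp]
    exact connectedComponentIn_mono _ (compl_subset_compl.2 hCK)
  have hcomp : ∀ p ∈ connectedComponentIn Cᶜ u,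
      IsCompact (closure (connectedComponentIn Kᶜ p)) := by
    intro p hp
    by_cases hpK : p ∈ Kᶜ
    · by_contra h
      exact hcon ⟨_, ⟨⟨p, hpK, rfl⟩, h⟩, hsub p hp⟩
    · simp [connectedComponentIn_eq_empty hpK]
  have hfr : IsCompact (frontier L) :=
    hL.of_isClosed_subset isClosed_frontier hL.isClosed.frontier_subset
  have hfrK : ∀ p ∈ frontier L, p ∈ Kᶜ := fun p hp hpK => hp.2 (hKL hpK)
  obtain ⟨t, ht, htc⟩ := hfr.elim_nhds_subcover (fun p => connectedComponentIn Kᶜ p)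
    (fun p hp => hK.isClosed.isOpen_compl.connectedComponentIn.mem_nhds
      (mem_connectedComponentIn (hfrK p hp)))
  let M : Set X := L ∪ ⋃ p ∈ {p ∈ (t : Set X) | p ∈ connectedComponentIn Cᶜ u},
    closure (connectedComponentIn Kᶜ p)
  have hM : IsCompact M := by
    refine hL.union (Set.Finite.isCompact_biUnion (t.finite_toSet.subset fun p hp => hp.1) ?_)
    exact fun p hp => hcomp p hp.2
  refine hM.of_isClosed_subset isClosed_closure (closure_minimal ?_ hM.isClosed)
  intro x hx
  by_cases hxL : x ∈ L
  · exact Or.inl hxL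
  right
  have hxK : x ∈ Kᶜ := fun h => hxL (interior_subset (hKL h))
  have hxV := mem_connectedComponentIn hxK
  have hmeet : ∃ y ∈ connectedComponentIn Kᶜ x, y ∈ frontier L := by
    by_contra hno
    push Not at hno
    have hVL : connectedComponentIn Kᶜ x ⊆ Lᶜ := by
      refine isPreconnected_connectedComponentIn.subset_left_of_subset_union
        hL.isClosed.isOpen_compl (isOpen_interior (s := L)) ?_ ?_ ⟨x, hxV, hxL⟩
      · exact disjoint_compl_left.mono_right interior_subset
      · intro y hy
        by_cases hyL : y ∈ L
        · right
          by_contra hyi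
          exact hno y hy ⟨subset_closure hyL, hyi⟩
        · exact Or.inl hyL
    have hclosed : IsClosed (connectedComponentIn Kᶜ x) := by
      rw [← closure_subset_iff_isClosed]
      intro y hy
      rcases closure_comp_subset K x hy with h | h
      · exact h
      · have := closure_mono hVL hy
        rw [closure_compl] at this
        exact absurd (hKL h) this
    have huniv := IsClopen.eq_univ
      ⟨hclosed, hK.isClosed.isOpen_compl.connectedComponentIn⟩ ⟨x, hxV⟩
    obtain ⟨k, hk⟩ := hKne
    exact connectedComponentIn_subset _ _ (huniv ▸ mem_univ k : k ∈ connectedComponentIn Kᶜ x) hk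
  obtain ⟨y, hyV, hyL⟩ := hmeet
  obtain ⟨p, hpt, hyp⟩ := mem_iUnion₂.1 (htc hyL)
  have heq : connectedComponentIn Kᶜ x = connectedComponentIn Kᶜ p :=
    (connectedComponentIn_eq hyV).trans (connectedComponentIn_eq hyp).symm
  refine mem_iUnion₂.2 ⟨p, ⟨hpt, ?_⟩, subset_closure (heq ▸ hxV)⟩
  apply hsub x hx
  rw [heq]
  exact mem_connectedComponentIn (hfrK p (ht p hpt))

theorem IsUC.nonempty {X : Type*} [TopologicalSpace X] {K A : Set X} (h : IsUC K A) :
    A.Nonempty := by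
  obtain ⟨⟨x, hx, rfl⟩, -⟩ := h
  exact ⟨x, mem_connectedComponentIn hx⟩

theorem IsUC.eq_of_mem {X : Type*} [TopologicalSpace X] {K A B : Set X} (hA : IsUC K A)
    (hB : IsUC K B) {y : X} (h1 : y ∈ A) (h2 : y ∈ B) : A = B := by
  obtain ⟨⟨x, hx, rfl⟩, -⟩ := hA
  obtain ⟨⟨z, hz, rfl⟩, -⟩ := hB
  exact (connectedComponentIn_eq h1).trans (connectedComponentIn_eq h2).symm

theorem IsUC.superset {X : Type*} [TopologicalSpace X] {K A P : Set X} (hA : IsUC K A)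
    (hP : IsPreconnected P) (hPK : Disjoint P K) (h : ¬ Disjoint A P) : P ⊆ A := by
  obtain ⟨⟨x, hx, rfl⟩, -⟩ := hA
  obtain ⟨y, hy, hyP⟩ := not_disjoint_iff.1 h
  rw [connectedComponentIn_eq hy]
  exact hP.subset_connectedComponentIn hyP (disjoint_left.1 hPK)

theorem IsUC.union {X : Type*} [TopologicalSpace X] {K A P D : Set X} (hA : IsUC K A)
    (hP : Disjoint A P) (hD : D = K ∪ P) : IsUC D A := by
  subst hD
  obtain ⟨⟨x, hx, rfl⟩, h⟩ := hA
  have hxV := mem_connectedComponentIn hx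
  have hxD : x ∈ (K ∪ P)ᶜ := by
    rintro (h | h)
    · exact hx h
    · exact disjoint_left.1 hP hxV h
  refine ⟨⟨x, hxD, ?_⟩, h⟩
  apply Subset.antisymm
  · refine isPreconnected_connectedComponentIn.subset_connectedComponentIn hxV ?_
    rintro y hy (h | h)
    · exact connectedComponentIn_subset _ _ hy h
    · exact disjoint_left.1 hP hy h
  · exact connectedComponentIn_mono _ (compl_subset_compl.2 subset_union_left)

theorem IsUC.smul {X : Type*} [TopologicalSpace X] {G : Type*} [Group G] [MulAction G X]
    [ContinuousConstSMul G X] (g : G) {K A : Set X} (hA : IsUC K A) : IsUC (g • K) (g • A) := by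
  obtain ⟨⟨x, hx, rfl⟩, h⟩ := hA
  refine ⟨⟨g • x, ?_, ?_⟩, ?_⟩
  · rw [← smul_set_compl]
    exact smul_mem_smul_set hx
  · rw [← smul_set_compl]
    exact (Homeomorph.smul g).image_connectedComponentIn hx
  · rw [closure_smul]
    intro hc
    apply h
    have := hc.smul g⁻¹
    rwa [inv_smul_smul] at this

theorem IsUC.ne {X : Type*} [TopologicalSpace X] [ConnectedSpace X] [LocallyConnectedSpace X]
    {K K' A B : Set X} (hK : IsClosed K) (hKne : K.Nonempty)
    (hdis : Disjoint K K') (hA : IsUC K A) (hB : IsUC K' B) : A ≠ B := by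
  rintro rfl
  have hne := hA.nonempty
  obtain ⟨⟨x, hx, hAx⟩, -⟩ := hA
  obtain ⟨⟨z, hz, hAz⟩, -⟩ := hB
  have hcl : IsClosed A := by
    rw [← closure_subset_iff_isClosed]
    intro y hy
    have h1 := closure_comp_subset K x (hAx ▸ hy)
    have h2 := closure_comp_subset K' z (hAz ▸ hy)
    rw [← hAx] at h1
    rw [← hAz] at h2
    rcases h1 with h1 | h1
    · exact h1
    · rcases h2 with h2 | h2
      · exact h2
      · exact (disjoint_left.1 hdis h1 h2).elim
  have hop : IsOpen A := hAx ▸ hK.isOpen_compl.connectedComponentIn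
  have huniv := IsClopen.eq_univ ⟨hcl, hop⟩ hne
  obtain ⟨k, hk⟩ := hKne
  have : k ∈ A := huniv ▸ mem_univ k
  rw [hAx] at this
  exact connectedComponentIn_subset _ _ this hk

open Classical in
theorem card_filter_UC {X : Type*} [TopologicalSpace X] {n : ℕ} {K P : Set X}
    (F : Fin n → Set X) (hinj : Function.Injective F) (hF : ∀ i, IsUC K (F i))
    (hP : IsPreconnected P) (hPne : P.Nonempty) (hPK : Disjoint P K) :
    n ≤ ((Finset.univ.filter fun i => Disjoint (F i) P).image F).card + 1 := by
  rw [Finset.card_image_of_injective _ hinj]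
  have h1 := Finset.card_filter_add_card_filter_not (s := (Finset.univ : Finset (Fin n)))
    (fun i => Disjoint (F i) P)
  have h2 : (Finset.univ.filter fun i => ¬ Disjoint (F i) P).card ≤ 1 := by
    rw [Finset.card_le_one]
    intro i hi j hj
    simp only [Finset.mem_filter, Finset.mem_univ, true_and] at hi hj
    obtain ⟨p, hp⟩ := hPne
    exact hinj ((hF i).eq_of_mem (hF j) ((hF i).superset hP hPK hi hp)
      ((hF j).superset hP hPK hj hp))
  simp only [Finset.card_univ, Fintype.card_fin] at h1
  omega

end EndsHelpers



/-- Let `X` be a connected, locally compact, locally connected Hausdorff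
space on which a group `G` acts by homeomorphisms, such that every compact `C ⊆ X` can be
moved off itself by some `g ∈ G`.  If `n ≥ 3` and there is a compact `C` such that `X \ C`
has at least `n` distinct unbounded components, then there is a compact `D` such that
`X \ D` has at least `n + 1` distinct unbounded components. -/
theorem stmt1 {X : Type*} [TopologicalSpace X] [ConnectedSpace X]
    [LocallyCompactSpace X] [LocallyConnectedSpace X] [T2Space X]
    {G : Type*} [Group G] [MulAction G X] [ContinuousConstSMul G X]
    (hmove : ∀ C : Set X, IsCompact C → ∃ g : G, (g • C) ∩ C = ∅)
    {n : ℕ} (hn : 3 ≤ n) {C : Set X} (hC : IsCompact C)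
    (f : Fin n → Set X) (hfinj : Function.Injective f)
    (hf : ∀ i, (∃ x ∈ Cᶜ, f i = connectedComponentIn Cᶜ x) ∧ ¬ IsCompact (closure (f i))) :
    ∃ D : Set X, IsCompact D ∧ ∃ g : Fin (n + 1) → Set X, Function.Injective g ∧
      ∀ i, (∃ x ∈ Dᶜ, g i = connectedComponentIn Dᶜ x) ∧ ¬ IsCompact (closure (g i)) := by
  classical
  obtain ⟨K, hK, hKc, hKne, hCK⟩ := exists_compact_conn_superset hC
  have hf' : ∀ i, IsUC C (f i) := hf
  choose F hF hFf using fun i => exists_UC_subset hK hKne hCK (hf' i)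
  have hFinj : Function.Injective F := by
    intro i j hij
    obtain ⟨y, hy⟩ := (hF i).nonempty
    exact hfinj ((hf' i).eq_of_mem (hf' j) (hFf i hy) (hFf j (hij ▸ hy)))
  obtain ⟨g, hg⟩ := hmove K hK
  have hdis : Disjoint (g • K) K := Set.disjoint_iff_inter_eq_empty.2 hg
  have hgc : IsPreconnected (g • K) := hKc.image _ (continuous_const_smul g).continuousOn
  have hgne : (g • K).Nonempty := hKne.smul_set
  have hgF : ∀ i, IsUC (g • K) (g • F i) := fun i => (hF i).smul g
  have hginj : Function.Injective fun i => g • F i :=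
    fun i j hij => hFinj (smul_left_cancel g hij)
  have c1 := card_filter_UC F hFinj hF hgc hgne hdis
  have c2 := card_filter_UC (fun i => g • F i) hginj hgF hKc hKne hdis.symm
  set S1 := (Finset.univ.filter fun i => Disjoint (F i) (g • K)).image F with hS1
  set S2 := (Finset.univ.filter fun i => Disjoint (g • F i) K).image (fun i => g • F i) with hS2
  have hd : Disjoint S1 S2 := by
    rw [Finset.disjoint_left]
    intro A h1 h2
    obtain ⟨i, -, rfl⟩ := Finset.mem_image.1 h1
    obtain ⟨j, -, h⟩ := Finset.mem_image.1 h2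
    exact IsUC.ne hK.isClosed hKne hdis.symm (hF i) (hgF j) h.symm
  have hcard : n + 1 ≤ (S1 ∪ S2).card := by
    rw [Finset.card_union_of_disjoint hd]
    omega
  have hall : ∀ A ∈ S1 ∪ S2, IsUC (K ∪ g • K) A := by
    intro A hA
    rcases Finset.mem_union.1 hA with h | h
    · obtain ⟨i, hi, rfl⟩ := Finset.mem_image.1 h
      exact (hF i).union (Finset.mem_filter.1 hi).2 rfl
    · obtain ⟨i, hi, rfl⟩ := Finset.mem_image.1 h
      exact (hgF i).union (Finset.mem_filter.1 hi).2 (Set.union_comm _ _)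
  obtain ⟨e⟩ : Nonempty (Fin (n + 1) ↪ (S1 ∪ S2 : Finset (Set X))) :=
    Function.Embedding.nonempty_of_card_le (by simpa using hcard)
  exact ⟨K ∪ g • K, hK.union (hK.smul g), fun i => (e i : Set X),
    fun i j hij => e.injective (Subtype.ext hij), fun i => hall _ (e i).2⟩
end

section
/- Let Γ be a connected, locally finite simple graph on an infinite vertex set V, and suppose a group acts transitively on V by graph automorphisms (for each pair of vertices u, v there is an automorphism of Γ carrying u to v). Then through every vertex v of Γ there is a geodesic line: a map l : ℤ → V with l 0 = v and Γ.dist (l m) (l n) = |m − n| for all m, n ∈ ℤ. -/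
lemma aux_finite {V : Type*} (Γ : SimpleGraph V) (hlf : Γ.LocallyFinite) (n : ℕ) :
    ∀ v : V, {w | ∃ p : Γ.Walk v w, p.length = n}.Finite := by
  induction n with
  | zero =>
    intro v
    refine (Set.finite_singleton v).subset ?_
    rintro w ⟨p, hp⟩
    exact (SimpleGraph.Walk.eq_of_length_eq_zero hp).symm
  | succ n ih =>
    intro v
    have hf : (Γ.neighborSet v).Finite := by
      have := hlf v
      exact Set.toFinite _
    refine (hf.biUnion (fun u _ => ih u)).subset ?_
    rintro w ⟨p, hp⟩
    cases p with
    | nil => simp at hp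
    | cons h q =>
      simp only [Set.mem_iUnion]
      exact ⟨_, h, q, by simpa using hp⟩

lemma aux_ball {V : Type*} (Γ : SimpleGraph V) (hconn : Γ.Connected) (hlf : Γ.LocallyFinite)
    (n : ℕ) (v : V) : {w | Γ.dist v w ≤ n}.Finite := by
  refine ((Set.finite_Iic n).biUnion (fun k _ => aux_finite Γ hlf k v)).subset ?_
  intro w hw
  obtain ⟨p, hp⟩ := hconn.exists_walk_length_eq_dist v w
  simp only [Set.mem_iUnion]
  exact ⟨p.length, by simpa [hp] using hw, p, rfl⟩

lemma aux_getVert {V : Type*} (Γ : SimpleGraph V) {u w : V} (p : Γ.Walk u w) (i d : ℕ) :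
    Γ.dist (p.getVert i) (p.getVert (i + d)) ≤ d := by
  rw [← SimpleGraph.Walk.drop_getVert]
  refine (Γ.dist_le ((p.drop i).take d)).trans ?_
  simp [SimpleGraph.Walk.take_length]

lemma aux_geo {V : Type*} (Γ : SimpleGraph V) (hconn : Γ.Connected) {u w : V} (p : Γ.Walk u w)
    (hp : p.length = Γ.dist u w) (i d : ℕ) (h : i + d ≤ p.length) :
    Γ.dist (p.getVert i) (p.getVert (i + d)) = d := by
  have h1 := aux_getVert Γ p 0 i
  have h2 := aux_getVert Γ p i d
  have h3 := aux_getVert Γ p (i + d) (p.length - (i + d))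
  rw [Nat.add_sub_cancel' h, p.getVert_length] at h3
  rw [Nat.zero_add, p.getVert_zero] at h1
  have t1 := hconn.dist_triangle (u := u) (v := p.getVert i) (w := w)
  have t2 := hconn.dist_triangle (u := p.getVert i) (v := p.getVert (i + d)) (w := w)
  omega

lemma aux_iso_le {V : Type*} (Γ : SimpleGraph V) (hconn : Γ.Connected) (φ : Γ ≃g Γ) (a b : V) :
    Γ.dist (φ a) (φ b) ≤ Γ.dist a b := by
  obtain ⟨p, hp⟩ := hconn.exists_walk_length_eq_dist a b
  have := Γ.dist_le (p.map φ.toHom)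
  rw [SimpleGraph.Walk.length_map, hp] at this
  exact this

lemma aux_iso {V : Type*} (Γ : SimpleGraph V) (hconn : Γ.Connected) (φ : Γ ≃g Γ) (a b : V) :
    Γ.dist (φ a) (φ b) = Γ.dist a b := by
  apply le_antisymm (aux_iso_le Γ hconn φ a b)
  simpa using aux_iso_le Γ hconn φ.symm (φ a) (φ b)

lemma aux_seg {V : Type*} [Infinite V] (Γ : SimpleGraph V)
    (hconn : Γ.Connected) (hlf : Γ.LocallyFinite)
    (htrans : ∀ u v : V, ∃ φ : Γ ≃g Γ, φ u = v) (v : V) (k : ℕ) :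
    ∃ f : ℤ → V, f 0 = v ∧ ∀ m n : ℤ, |m| ≤ k → |n| ≤ k →
      (Γ.dist (f m) (f n) : ℤ) = |m - n| := by
  obtain ⟨w, hw⟩ := (aux_ball Γ hconn hlf (2 * k) v).exists_notMem
  obtain ⟨p, hp⟩ := hconn.exists_walk_length_eq_dist v w
  obtain ⟨φ, hφ⟩ := htrans (p.getVert k) v
  simp only [Set.mem_ofPred_eq, not_le] at hw
  have key : ∀ m n : ℤ, |m| ≤ k → |n| ≤ k → m ≤ n →
      (Γ.dist (φ (p.getVert (m + k).toNat)) (φ (p.getVert (n + k).toNat)) : ℤ) = |m - n| := by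
    intro m n hm hn hmn
    rw [abs_le] at hm hn
    rw [aux_iso Γ hconn]
    have := aux_geo Γ hconn p hp (m + k).toNat (n - m).toNat (by omega)
    rw [show (m + k).toNat + (n - m).toNat = (n + k).toNat by omega] at this
    rw [this, abs_of_nonpos (by omega)]
    omega
  refine ⟨fun z => φ (p.getVert (z + k).toNat), by simpa using hφ, ?_⟩
  intro m n hm hn
  rcases le_total m n with h | h
  · exact key m n hm hn h
  · rw [Γ.dist_comm, abs_sub_comm]
    exact key n m hn hm h

/-- If a group acts transitively by automorphisms on a connected,
locally finite graph `Γ` with infinitely many vertices, then through every vertex of `Γ`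
there is a geodesic line `l : ℤ → V`. -/
theorem stmt2 {V : Type*} [Infinite V] (Γ : SimpleGraph V)
    (hconn : Γ.Connected) (hlf : Γ.LocallyFinite)
    (htrans : ∀ u v : V, ∃ φ : Γ ≃g Γ, φ u = v) (v : V) :
    ∃ l : ℤ → V, l 0 = v ∧ ∀ m n : ℤ, (Γ.dist (l m) (l n) : ℤ) = |m - n| := by
  choose f hf0 hf using aux_seg Γ hconn hlf htrans v
  let U : Ultrafilter ℕ := Filter.hyperfilter ℕ
  have hlarge : ∀ z : ℤ, ∀ᶠ k : ℕ in (U : Filter ℕ), |z| ≤ k := by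
    intro z
    have h : ∀ᶠ k : ℕ in Filter.atTop, |z| ≤ k := by
      filter_upwards [Filter.eventually_ge_atTop z.natAbs] with k hk
      rw [Int.abs_eq_natAbs]
      exact_mod_cast hk
    rw [← Nat.cofinite_eq_atTop] at h
    exact Filter.hyperfilter_le_cofinite h
  have hex : ∀ z : ℤ, ∃ x, ∀ᶠ k : ℕ in (U : Filter ℕ), f k z = x := by
    intro z
    have hfin := aux_ball Γ hconn hlf z.natAbs v
    have hmem : (⋃ x ∈ {w | Γ.dist v w ≤ z.natAbs}, {k : ℕ | f k z = x}) ∈ U := by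
      filter_upwards [hlarge z] with k hk
      simp only [Set.mem_iUnion]
      refine ⟨f k z, ?_, rfl⟩
      have := hf k 0 z (by simp) hk
      rw [hf0] at this
      change Γ.dist v (f k z) ≤ z.natAbs
      rw [zero_sub, abs_neg, Int.abs_eq_natAbs] at this
      omega
    obtain ⟨x, -, hx⟩ := (Ultrafilter.finite_biUnion_mem_iff hfin).1 hmem
    exact ⟨x, hx⟩
  choose l hl using hex
  refine ⟨l, ?_, ?_⟩
  · obtain ⟨k, hk⟩ := (hl 0).exists
    rw [← hk, hf0]
  · intro m n
    obtain ⟨k, ⟨⟨h1, h2⟩, h3⟩, h4⟩ :=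
      ((((hl m).and (hl n)).and (hlarge m)).and (hlarge n)).exists
    rw [← h1, ← h2]
    exact hf k m n h3 h4
end

section
/- Let Γ be a connected, locally finite simple graph on vertex set V and let l : ℤ → V be a geodesic line, i.e. Γ.dist (l m) (l n) = |m − n| for all m, n ∈ ℤ. If there exists k > 0 such that every vertex of Γ is within distance k of the image of l, then Γ has exactly two ends, i.e. the cardinality of the set of ends of Γ equals 2. -/
namespace Stmt3Aux

open SimpleGraph CategoryTheory

variable {V : Type*} {Γ : SimpleGraph V}

theorem ball_finite (hconn : Γ.Connected) (hlf : Γ.LocallyFinite) (x : V) (r : ℕ) :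
    {v : V | Γ.dist v x ≤ r}.Finite := by
  induction r with
  | zero =>
    refine (Set.finite_singleton x).subset ?_
    intro v hv
    have hv' : Γ.dist v x = 0 := Nat.le_zero.mp hv
    exact hconn.dist_eq_zero_iff.mp hv'
  | succ r ih =>
    have hfin : (⋃ w ∈ {v : V | Γ.dist v x ≤ r}, Γ.neighborSet w).Finite :=
      ih.biUnion (fun w _ => by
        have := hlf w
        exact Set.toFinite _)
    refine (ih.union hfin).subset ?_
    intro v hv
    have hv' : Γ.dist v x ≤ r + 1 := hv
    by_cases h : Γ.dist v x ≤ r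
    · exact Or.inl h
    · right
      obtain ⟨p, hp⟩ := hconn.exists_walk_length_eq_dist v x
      cases p with
      | nil => simp at h
      | @cons _ w _ a q =>
        have h1 : q.length + 1 = Γ.dist v x := by simpa using hp
        have h2 := Γ.dist_le q
        have h3 : Γ.dist w x ≤ r := by omega
        exact Set.mem_biUnion (show w ∈ {v : V | Γ.dist v x ≤ r} from h3) a.symm

theorem mk_eq_of_ball (hconn : Γ.Connected) (K : Set V) (w : V) (n : ℕ)
    (hb : ∀ u, Γ.dist u w ≤ n → u ∉ K) (hw : w ∉ K) :
    ∀ m : ℕ, m ≤ n → ∀ v (hv : v ∉ K), Γ.dist v w ≤ m →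
      Γ.componentComplMk hv = Γ.componentComplMk hw := by
  intro m
  induction m with
  | zero =>
    intro _ v hv h
    have : v = w := hconn.dist_eq_zero_iff.mp (Nat.le_zero.mp h)
    subst this
    rfl
  | succ m ih =>
    intro hmn v hv h
    obtain ⟨p, hp⟩ := hconn.exists_walk_length_eq_dist v w
    cases p with
    | nil => rfl
    | @cons _ y _ a q =>
      have h1 : q.length + 1 = Γ.dist v w := by simpa using hp
      have h2 := Γ.dist_le q
      have h3 : Γ.dist y w ≤ m := by omega
      have hy : y ∉ K := hb y (by omega)
      exact (Γ.componentComplMk_eq_of_adj hv hy a).trans (ih (by omega) y hy h3)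

theorem ray_eq (r : ℕ → V) (hadj : ∀ n, Γ.Adj (r n) (r (n + 1))) (K : Set V) (N : ℕ)
    (hN : ∀ n, N ≤ n → r n ∉ K) (n : ℕ) (hn : N ≤ n) :
    Γ.componentComplMk (hN n hn) = Γ.componentComplMk (hN N le_rfl) := by
  induction n, hn using Nat.le_induction with
  | base => rfl
  | succ n hn ih =>
    rw [← ih]
    exact (Γ.componentComplMk_eq_of_adj _ _ (hadj n)).symm

theorem ray_end (r : ℕ → V) (hadj : ∀ n, Γ.Adj (r n) (r (n + 1))) (N : Finset V → ℕ)
    (hN : ∀ K n, N K ≤ n → r n ∉ (K : Set V)) :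
    ∃ e : Γ.end, ∀ (K : Finset V) n (hn : N K ≤ n),
      e.1 (Opposite.op K) = Γ.componentComplMk (hN K n hn) := by
  refine ⟨⟨fun K => Γ.componentComplMk (hN K.unop _ le_rfl), ?_⟩, ?_⟩
  · intro L K f
    have hsub : (K.unop : Set V) ⊆ L.unop := le_of_op_hom f
    change (Γ.componentComplMk (hN L.unop _ le_rfl)).hom hsub = _
    rw [← ray_eq r hadj _ _ (hN L.unop) (max (N L.unop) (N K.unop)) (le_max_left _ _),
      ComponentCompl.hom_mk]
    exact ray_eq r hadj _ _ (hN K.unop) (max (N L.unop) (N K.unop)) (le_max_right _ _)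
  · intro K n hn
    exact (ray_eq r hadj _ _ (hN K) n hn).symm

theorem end_mono (e : Γ.end) {K L : Finset V} (h : K ⊆ L) {v : V} (hv : v ∉ (L : Set V))
    (he : e.1 (Opposite.op L) = Γ.componentComplMk hv) :
    e.1 (Opposite.op K) =
      Γ.componentComplMk (Set.notMem_subset (Finset.coe_subset.mpr h) hv) :=
  Γ.end_hom_mk_of_mk e.2 (opHomOfLE h : Opposite.op L ⟶ Opposite.op K) hv he

theorem end_eq_of_le (e f : Γ.end) {K L : Finset V} (h : K ⊆ L)
    (hef : e.1 (Opposite.op L) = f.1 (Opposite.op L)) :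
    e.1 (Opposite.op K) = f.1 (Opposite.op K) := by
  rw [← e.2 (opHomOfLE h : Opposite.op L ⟶ Opposite.op K),
    ← f.2 (opHomOfLE h : Opposite.op L ⟶ Opposite.op K), hef]

end Stmt3Aux

open SimpleGraph Stmt3Aux in
/-- If `Γ` is a connected locally finite graph containing a geodesic
line `l : ℤ → V` such that every vertex is within distance `k` of the image of `l`
(for some `k > 0`), then `Γ` has exactly two ends. -/
theorem stmt3 {V : Type*} (Γ : SimpleGraph V) (hconn : Γ.Connected)
    (hlf : Γ.LocallyFinite) (l : ℤ → V)
    (hgeo : ∀ m n : ℤ, (Γ.dist (l m) (l n) : ℤ) = |m - n|)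
    (k : ℕ) (hk : 0 < k) (hcover : ∀ v : V, ∃ n : ℤ, Γ.dist v (l n) ≤ k) :
    Nat.card Γ.end = 2 := by
  classical
  have tri : ∀ u v w, Γ.dist u w ≤ Γ.dist u v + Γ.dist v w := fun u v w => hconn.dist_triangle
  let N : Finset V → ℕ := fun K => K.sup (fun v => Γ.dist v (l 0)) + k + 1
  have hN : ∀ (K : Finset V) (n : ℤ), (N K : ℤ) ≤ |n| → ∀ v, Γ.dist v (l n) ≤ k →
      v ∉ (K : Set V) := by
    intro K n hn v hv hvK
    have h1 : Γ.dist v (l 0) ≤ K.sup (fun v => Γ.dist v (l 0)) :=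
      Finset.le_sup (f := fun v => Γ.dist v (l 0)) (Finset.mem_coe.mp hvK)
    have h2 := tri (l n) v (l 0)
    rw [Γ.dist_comm (u := l n) (v := v)] at h2
    have h3 := hgeo n 0
    rw [sub_zero] at h3
    simp only [N] at hn
    omega
  have hself : ∀ n, Γ.dist (l n) (l n) ≤ k := fun n => by simp
  have hadj : ∀ m n : ℤ, |m - n| = 1 → Γ.Adj (l m) (l n) := by
    intro m n h
    rw [← SimpleGraph.dist_eq_one_iff_adj]
    have := hgeo m n
    omega
  have hNp : ∀ (K : Finset V) (n : ℕ), N K ≤ n → l (n : ℤ) ∉ (K : Set V) := fun K n hn =>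
    hN K n (by rw [Nat.abs_cast]; exact_mod_cast hn) _ (hself _)
  have hNm : ∀ (K : Finset V) (n : ℕ), N K ≤ n → l (-(n : ℤ)) ∉ (K : Set V) := fun K n hn =>
    hN K _ (by rw [abs_neg, Nat.abs_cast]; exact_mod_cast hn) _ (hself _)
  obtain ⟨ep, hep⟩ := ray_end (Γ := Γ) (fun n : ℕ => l n)
    (fun n => hadj _ _ (by push_cast; rw [abs_eq] <;> omega)) N hNp
  obtain ⟨em, hem⟩ := ray_end (Γ := Γ) (fun n : ℕ => l (-(n : ℤ)))
    (fun n => hadj _ _ (by push_cast; rw [abs_eq] <;> omega)) N hNm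
  rw [Nat.card_eq_two_iff]
  refine ⟨ep, em, ?_, ?_⟩
  · intro heq
    let K : Finset V := (ball_finite hconn hlf (l 0) (3 * k)).toFinset
    have hK : ∀ v, v ∉ (K : Set V) → 3 * k < Γ.dist v (l 0) := by
      intro v hv
      simpa [K] using hv
    have key : ∀ v w, v ∉ (K : Set V) → Γ.Adj v w → (∃ m : ℤ, 0 ≤ m ∧ Γ.dist v (l m) ≤ k) →
        ∃ m : ℤ, 0 ≤ m ∧ Γ.dist w (l m) ≤ k := by
      rintro v w hv a ⟨m, hm, hd⟩
      obtain ⟨m', hm'⟩ := hcover w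
      by_cases h : 0 ≤ m'
      · exact ⟨m', h, hm'⟩
      exfalso
      have h1 := hK v hv
      have h2 := tri v (l m) (l 0)
      have h3 := hgeo m 0
      have h4 := hgeo m m'
      have h5 := tri (l m) v (l m')
      have h6 := tri v w (l m')
      have h7 := SimpleGraph.dist_eq_one_iff_adj.mpr a
      rw [Γ.dist_comm (u := l m) (v := v)] at h5
      rw [abs_of_nonneg (by omega)] at h3 h4
      omega
    let F : Γ.ComponentCompl (K : Set V) → Prop :=
      ComponentCompl.lift (fun v _ => ∃ m : ℤ, 0 ≤ m ∧ Γ.dist v (l m) ≤ k)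
        (fun v w hv hw a => propext ⟨key v w hv a, key w v hw a.symm⟩)
    have hc : Γ.componentComplMk (hNp K _ le_rfl) = Γ.componentComplMk (hNm K _ le_rfl) := by
      rw [← hep K _ le_rfl, ← hem K _ le_rfl, heq]
    have hF1 : F (Γ.componentComplMk (hNp K _ le_rfl)) := ⟨(N K : ℤ), by omega, hself _⟩
    rw [hc] at hF1
    obtain ⟨m, hm, hd⟩ := hF1
    have hd' : Γ.dist (l (-(N K : ℤ))) (l m) ≤ k := hd
    have h1 := hgeo (-(N K : ℤ)) m
    rw [abs_of_nonpos (by omega)] at h1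
    have h2 : k + 1 ≤ N K := by simp only [N]; omega
    omega
  · have main : ∀ (e : Γ.end) (K : Finset V), e.1 (Opposite.op K) = ep.1 (Opposite.op K) ∨
        e.1 (Opposite.op K) = em.1 (Opposite.op K) := by
      intro e K
      let B : Finset V := (Finset.Icc (-(N K : ℤ)) (N K)).biUnion
        (fun m => (ball_finite hconn hlf (l m) k).toFinset)
      obtain ⟨v, hv, hev⟩ := ComponentCompl.exists_eq_mk (e.1 (Opposite.op (K ∪ B)))
      have hv' : v ∉ ((K ∪ B : Finset V) : Set V) := hv
      have h1 := end_mono e (Finset.subset_union_left (s₁ := K) (s₂ := B)) hv' hev.symm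
      obtain ⟨m, hm⟩ := hcover v
      have hmB : ¬ (-(N K : ℤ) ≤ m ∧ m ≤ N K) := by
        intro h
        apply hv'
        simp only [B, Finset.coe_union]
        right
        simp only [Finset.mem_coe, Finset.mem_biUnion, Finset.mem_Icc]
        exact ⟨m, h, by simpa using hm⟩
      have hmN : (N K : ℤ) ≤ |m| := by
        rcases abs_cases m with h | h <;> omega
      have h2 := mk_eq_of_ball hconn (K : Set V) (l m) k (hN K m hmN) (hN K m hmN _ (hself m))
        k le_rfl v (hN K m hmN v hm) hm
      rcases le_total 0 m with h0 | h0
      · left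
        obtain ⟨n, rfl⟩ := Int.eq_ofNat_of_zero_le h0
        rw [h1, hep K n (by omega)]
        exact h2
      · right
        obtain ⟨n, hn⟩ := Int.eq_ofNat_of_zero_le (show 0 ≤ -m by omega)
        obtain rfl : m = -(n : ℤ) := by omega
        rw [h1, hem K n (by omega)]
        exact h2
    refine Set.eq_univ_of_forall fun e => ?_
    by_contra hcon
    simp only [Set.mem_insert_iff, Set.mem_singleton_iff, not_or] at hcon
    obtain ⟨c1, c2⟩ := hcon
    have d1 : ∃ K : Finset V, e.1 (Opposite.op K) ≠ ep.1 (Opposite.op K) := by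
      by_contra! h
      exact c1 (Subtype.ext (funext fun K => h K.unop))
    have d2 : ∃ K : Finset V, e.1 (Opposite.op K) ≠ em.1 (Opposite.op K) := by
      by_contra! h
      exact c2 (Subtype.ext (funext fun K => h K.unop))
    obtain ⟨K1, d1⟩ := d1
    obtain ⟨K2, d2⟩ := d2
    rcases main e (K1 ∪ K2) with h | h
    · exact d1 (end_eq_of_le e ep Finset.subset_union_left h)
    · exact d2 (end_eq_of_le e em Finset.subset_union_right h)
end

section
/- Let Γ be a connected, locally finite simple graph on vertex set V, and let r : ℕ → V be a proper ray: Γ.Adj (r n) (r (n+1)) for all n, and for every finite K ⊆ V the set {n | r n ∈ K} is finite. Then for every vertex w there is a geodesic ray s : ℕ → V with s 0 = w, Γ.Adj (s n) (s (n+1)) for all n, and Γ.dist w (s n) = n for all n, such that s converges to the same end as r: for every finite K ⊆ V there exists N such that for all m, n ≥ N the vertices r m and s n lie outside K and are joined by a walk in Γ none of whose vertices lies in K (equivalently, they are reachable from one another in the induced subgraph on the complement of K). -/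
theorem stmt4_step {V : Type*} (Γ : SimpleGraph V) (hconn : Γ.Connected)
    (hlf : Γ.LocallyFinite) (r : ℕ → V)
    (hproper : ∀ K : Set V, K.Finite → {n | r n ∈ K}.Finite)
    (w : V) (n : ℕ) (v : V) (hd : Γ.dist w v = n)
    (hinf : {m | n + Γ.dist v (r m) = Γ.dist w (r m)}.Infinite) :
    ∃ u, Γ.Adj v u ∧ Γ.dist w u = n + 1 ∧
      {m | n + 1 + Γ.dist u (r m) = Γ.dist w (r m)}.Infinite := by
  have hfin : (Γ.neighborSet v).Finite := by
    haveI := hlf v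
    exact Set.toFinite _
  have h1 := hinf.diff (hproper {v} (Set.finite_singleton v))
  have h2 : ∃ u ∈ Γ.neighborSet v,
      {m | n + 1 + Γ.dist u (r m) = Γ.dist w (r m)}.Infinite := by
    by_contra hcon
    push Not at hcon
    apply h1
    refine (hfin.biUnion (t := fun u => {m | n + 1 + Γ.dist u (r m) = Γ.dist w (r m)})
      (fun u hu => by simpa using hcon u hu)).subset ?_
    rintro m ⟨hm, hne⟩
    simp only [Set.mem_setOf_eq, Set.mem_singleton_iff] at hm hne
    obtain ⟨p, hp⟩ := hconn.exists_walk_length_eq_dist v (r m)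
    simp only [Set.mem_iUnion, Set.mem_setOf_eq]
    generalize r m = y at *
    cases p with
    | nil => exact absurd rfl hne
    | @cons _ u _ h q =>
      refine ⟨u, h, ?_⟩
      rw [SimpleGraph.Walk.length_cons] at hp
      have a1 := SimpleGraph.dist_le q
      have a2 : Γ.dist w y ≤ Γ.dist w u + Γ.dist u y := hconn.dist_triangle
      have a3 : Γ.dist w u ≤ Γ.dist w v + Γ.dist v u := hconn.dist_triangle
      have a4 : Γ.dist v u = 1 := SimpleGraph.dist_eq_one_iff_adj.2 h
      omega
  obtain ⟨u, hu, hui⟩ := h2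
  refine ⟨u, hu, ?_, hui⟩
  obtain ⟨m, hm⟩ := hui.nonempty
  simp only [Set.mem_setOf_eq] at hm
  have a2 : Γ.dist w (r m) ≤ Γ.dist w u + Γ.dist u (r m) := hconn.dist_triangle
  have a3 : Γ.dist w u ≤ Γ.dist w v + Γ.dist v u := hconn.dist_triangle
  have a4 : Γ.dist v u = 1 := SimpleGraph.dist_eq_one_iff_adj.2 hu
  omega

theorem stmt4_ray {V : Type*} (Γ : SimpleGraph V) (r : ℕ → V)
    (hadj : ∀ n, Γ.Adj (r n) (r (n + 1))) (K : Set V) (N : ℕ)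
    (hN : ∀ m, N ≤ m → r m ∉ K) (m : ℕ) (hm : N ≤ m) (k : ℕ) :
    ∃ p : Γ.Walk (r m) (r (m + k)), ∀ x ∈ p.support, x ∉ K := by
  induction k with
  | zero => exact ⟨SimpleGraph.Walk.nil, by simpa using hN m hm⟩
  | succ k ih =>
    obtain ⟨p, hp⟩ := ih
    refine ⟨p.concat (hadj (m + k)), ?_⟩
    intro x hx
    rw [SimpleGraph.Walk.support_concat] at hx
    simp only [List.concat_eq_append, List.mem_append, List.mem_singleton] at hx
    rcases hx with hx | rfl
    · exact hp x hx
    · exact hN _ (by omega)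

/-- In a connected locally finite graph, for every proper ray `r` and
every vertex `w` there is a geodesic ray `s` starting at `w` converging to the same end
as `r`: for every finite set `K` of vertices, far-out points of `r` and of `s` avoid `K`
and can be joined by walks avoiding `K`. -/
theorem stmt4 {V : Type*} (Γ : SimpleGraph V) (hconn : Γ.Connected)
    (hlf : Γ.LocallyFinite) (r : ℕ → V)
    (hadj : ∀ n, Γ.Adj (r n) (r (n + 1)))
    (hproper : ∀ K : Set V, K.Finite → {n | r n ∈ K}.Finite)
    (w : V) :
    ∃ s : ℕ → V, s 0 = w ∧ (∀ n, Γ.Adj (s n) (s (n + 1))) ∧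
      (∀ n, Γ.dist w (s n) = n) ∧
      (∀ K : Set V, K.Finite → ∃ N : ℕ, ∀ m n : ℕ, N ≤ m → N ≤ n →
        r m ∉ K ∧ s n ∉ K ∧ ∃ p : Γ.Walk (r m) (s n), ∀ x ∈ p.support, x ∉ K) := by
  classical
  have step := stmt4_step Γ hconn hlf r hproper w
  choose! f hf1 hf2 hf3 using step
  let s : ℕ → V := fun n => Nat.rec w (fun n v => f n v) n
  have hs : ∀ n, Γ.dist w (s n) = n ∧
      {m | n + Γ.dist (s n) (r m) = Γ.dist w (r m)}.Infinite := by
    intro n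
    induction n with
    | zero =>
      refine ⟨SimpleGraph.dist_self, ?_⟩
      have : {m | 0 + Γ.dist (s 0) (r m) = Γ.dist w (r m)} = Set.univ := by
        ext m
        simp [s]
      rw [this]
      exact Set.infinite_univ
    | succ n ih => exact ⟨hf2 n _ ih.1 ih.2, hf3 n _ ih.1 ih.2⟩
  refine ⟨s, rfl, fun n => hf1 n _ (hs n).1 (hs n).2, fun n => (hs n).1, ?_⟩
  intro K hK
  obtain ⟨A, hA⟩ := (hproper K hK).bddAbove
  obtain ⟨B, hB⟩ := (hK.image (fun x => Γ.dist w x)).bddAbove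
  have hB' : ∀ x ∈ K, Γ.dist w x ≤ B := fun x hx => hB ⟨x, hx, rfl⟩
  have hA' : ∀ m, A + B + 1 ≤ m → r m ∉ K := by
    intro m hm hmK
    have : m ≤ A := hA hmK
    omega
  refine ⟨A + B + 1, fun m n hm hn => ⟨hA' m hm, ?_, ?_⟩⟩
  · intro h
    have a := hB' _ h
    rw [(hs n).1] at a
    omega
  · obtain ⟨m', hm', hlt⟩ := (hs n).2.exists_gt m
    simp only [Set.mem_setOf_eq] at hm'
    have hray := stmt4_ray Γ r hadj K _ hA' m hm (m' - m)
    rw [show m + (m' - m) = m' by omega] at hray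
    obtain ⟨q, hq⟩ := hray
    obtain ⟨p, hp⟩ := hconn.exists_walk_length_eq_dist (s n) (r m')
    refine ⟨q.append p.reverse, ?_⟩
    intro x hx
    rw [SimpleGraph.Walk.mem_support_append_iff] at hx
    rcases hx with hx | hx
    · exact hq x hx
    · rw [SimpleGraph.Walk.support_reverse, List.mem_reverse] at hx
      intro hxK
      have a1 := hB' x hxK
      have a2 : Γ.dist w (r m') ≤ Γ.dist w x + Γ.dist x (r m') := hconn.dist_triangle
      have a3 := SimpleGraph.dist_le (p.dropUntil x hx)
      have a4 := p.length_dropUntil_le hx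
      omega
end

section
/- Let H, G₁, G₂ be groups and φᵢ : H → Gᵢ (i = 1, 2) injective group homomorphisms, and let G = G₁ ∗_H G₂ be the amalgamated free product (the pushout of the φᵢ). Suppose the image of φ₁ has index at least 3 in G₁ (where infinite index counts) and the image of φ₂ has index at least 2 in G₂. Then G contains a free subgroup of rank 2: there is an injective group homomorphism from the free group on two generators into G. -/
open Monoid Monoid.PushoutI Monoid.PushoutI.NormalWord Pointwise

theorem aux_smul {H : Type*} [Group H] {G : Fin 2 → Type*} [∀ i, Group (G i)]
    {φ : ∀ i, H →* G i} [∀ i, DecidableEq (G i)] (d : Transversal φ) (i : Fin 2) (g : G i)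
    (hg : g ∉ (φ i).range) (w : NormalWord d) (hw : w.fstIdx ≠ some i) :
    ((of i g : PushoutI φ) • w).fstIdx = some i := by
  have h := cons_eq_smul g w hw hg
  rw [← h]
  simp [NormalWord.cons, CoprodI.Word.fstIdx, CoprodI.Word.cons]

theorem aux_pp.{u, v} {P : Type u} {α : Type v} [Group P] [MulAction P α] (Z : Set α) (hZ : Z.Nonempty)
    (a c b : P) (ha : ∀ z ∈ Z, a • z ∉ Z) (hc : ∀ z ∈ Z, c • z ∉ Z)
    (hac : ∀ z ∈ Z, (c⁻¹ * a) • z ∉ Z)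
    (hb : ∀ z ∉ Z, b • z ∈ Z) (hb' : ∀ z ∉ Z, b⁻¹ • z ∈ Z) :
    ∃ f : FreeGroup Bool →* P, Function.Injective f := by
  have hd : Disjoint (a • Z) (c • Z) := by
    rw [Set.disjoint_left]
    rintro _ ⟨z, hz, rfl⟩ h
    rw [Set.mem_smul_set_iff_inv_smul_mem] at h
    exact hac z hz (by simpa [mul_smul] using h)
  have sa : a • Z ⊆ Zᶜ := by rintro _ ⟨z, hz, rfl⟩; exact ha z hz
  have sc : c • Z ⊆ Zᶜ := by rintro _ ⟨z, hz, rfl⟩; exact hc z hz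
  have sb : b • Zᶜ ⊆ Z := by rintro _ ⟨z, hz, rfl⟩; exact hb z hz
  have sb' : b⁻¹ • Zᶜ ⊆ Z := by rintro _ ⟨z, hz, rfl⟩; exact hb' z hz
  have sba : b • a • Z ⊆ Z := (Set.smul_set_mono sa).trans sb
  have sbc : b • c • Z ⊆ Z := (Set.smul_set_mono sc).trans sb
  have k1 : (a * b * c⁻¹) • (c • Z)ᶜ ⊆ a • Z := by
    rw [← Set.smul_set_compl, smul_smul]
    simp only [inv_mul_cancel_right, mul_smul]
    exact Set.smul_set_mono sb
  have k2 : (a * b * c⁻¹)⁻¹ • (a • Z)ᶜ ⊆ c • Z := by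
    rw [← Set.smul_set_compl, smul_smul]
    simp only [mul_inv_rev, inv_inv, mul_assoc, inv_mul_cancel, mul_one, mul_smul]
    exact Set.smul_set_mono sb'
  let A : ULift.{u} Bool → P := fun i => if i.down then b * (a * b * c⁻¹) * b⁻¹ else a * b * c⁻¹
  let X : ULift.{u} Bool → Set α := fun i => if i.down then b • a • Z else a • Z
  let Y : ULift.{u} Bool → Set α := fun i => if i.down then b • c • Z else c • Z
  have dz : ∀ {s t : Set α}, s ⊆ Z → t ⊆ Zᶜ → Disjoint s t := fun hs ht =>
    Set.disjoint_of_subset hs ht disjoint_compl_right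
  suffices h : Function.Injective (FreeGroup.lift A) from
    ⟨(FreeGroup.lift A).comp (FreeGroup.freeGroupCongr Equiv.ulift.symm).toMonoidHom,
      h.comp (FreeGroup.freeGroupCongr Equiv.ulift.symm).injective⟩
  refine FreeGroup.injective_lift_of_ping_pong A X Y ?_ ?_ ?_ ?_ ?_ ?_
  · rintro ⟨_ | _⟩ <;> simp [X, hZ]
  · rintro ⟨_ | _⟩ ⟨_ | _⟩ h
    · exact absurd rfl h
    · exact (dz sba sa).symm
    · exact dz sba sa
    · exact absurd rfl h
  · rintro ⟨_ | _⟩ ⟨_ | _⟩ h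
    · exact absurd rfl h
    · exact (dz sbc sc).symm
    · exact dz sbc sc
    · exact absurd rfl h
  · rintro ⟨_ | _⟩ ⟨_ | _⟩
    · exact hd
    · exact (dz sbc sa).symm
    · exact dz sba sc
    · exact (Set.disjoint_image_iff (MulAction.injective b)).2 hd
  · rintro ⟨_ | _⟩
    · exact k1
    · change (b * (a * b * c⁻¹) * b⁻¹) • (b • c • Z)ᶜ ⊆ b • a • Z
      rw [← Set.smul_set_compl, smul_smul, inv_mul_cancel_right, mul_smul]
      exact Set.smul_set_mono k1
  · rintro ⟨_ | _⟩
    · exact k2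
    · change (b * (a * b * c⁻¹) * b⁻¹)⁻¹ • (b • a • Z)ᶜ ⊆ b • c • Z
      rw [← Set.smul_set_compl, smul_smul, mul_inv_rev, mul_inv_rev b, inv_inv, mul_assoc,
        inv_mul_cancel_right, mul_smul]
      exact Set.smul_set_mono k2


/-- Let `G = G₁ ∗_H G₂` be an amalgamated free product along injective
homomorphisms `φ i : H →* G i`, where the image of `φ 0` has index at least `3` in `G 0`
(infinite index allowed, i.e. index `0`) and the image of `φ 1` has index at least `2`
in `G 1`.  Then `G` contains a free subgroup of rank `2`. -/
theorem stmt10 {H : Type*} [Group H] {G : Fin 2 → Type*} [∀ i, Group (G i)]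
    (φ : ∀ i, H →* G i) (hinj : ∀ i, Function.Injective (φ i))
    (h0 : (φ 0).range.index = 0 ∨ 3 ≤ (φ 0).range.index)
    (h1 : (φ 1).range.index = 0 ∨ 2 ≤ (φ 1).range.index) :
    ∃ f : FreeGroup Bool →* Monoid.PushoutI φ, Function.Injective f := by
  classical
  obtain ⟨d⟩ := transversal_nonempty φ hinj
  obtain ⟨b, hb⟩ : ∃ b, b ∉ (φ 1).range := by
    by_contra! h
    have := Subgroup.index_eq_one.2 ((Subgroup.eq_top_iff' _).2 h)
    omega
  obtain ⟨a, ha⟩ : ∃ a, a ∉ (φ 0).range := by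
    by_contra! h
    have := Subgroup.index_eq_one.2 ((Subgroup.eq_top_iff' _).2 h)
    omega
  obtain ⟨c, hc, hca⟩ : ∃ c, c ∉ (φ 0).range ∧ c⁻¹ * a ∉ (φ 0).range := by
    by_contra! h
    have : (φ 0).range.index = 2 := by
      refine Subgroup.index_eq_two_iff.2 ⟨a, fun b => ?_⟩
      by_cases hb : b ∈ (φ 0).range
      · exact Or.inr ⟨hb, fun h' => ha ((Subgroup.mul_mem_cancel_left _ hb).1 h')⟩
      · exact Or.inl ⟨by simpa using h b⁻¹ (by rwa [inv_mem_iff]), hb⟩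
    omega
  refine aux_pp (α := NormalWord d) {w | w.fstIdx ≠ some 0} ⟨NormalWord.empty, ?_⟩
    (of 0 a) (of 0 c) (of 1 b) ?_ ?_ ?_ ?_ ?_
  · simp [NormalWord.empty, CoprodI.Word.fstIdx, CoprodI.Word.empty]
  · intro z hz h
    exact h (aux_smul d 0 a ha z hz)
  · intro z hz h
    exact h (aux_smul d 0 c hc z hz)
  · intro z hz h
    rw [← map_inv, ← map_mul] at h
    exact h (aux_smul d 0 _ hca z hz)
  · intro z hz
    have hz : z.fstIdx = some 0 := not_not.1 hz
    have := aux_smul d 1 b hb z (by simp [hz])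
    simp [this]
  · intro z hz
    have hz : z.fstIdx = some 0 := not_not.1 hz
    have := aux_smul d 1 b⁻¹ (by rwa [inv_mem_iff]) z (by simp [hz])
    rw [map_inv] at this
    simp [this]
end

section
/- Let H, G₁, G₂ be groups and φᵢ : H → Gᵢ (i = 1, 2) injective but non-surjective group homomorphisms, and let G = G₁ ∗_H G₂ be the amalgamated free product. Then for each i the image of the canonical homomorphism of_i : Gᵢ → G has infinite index in G. In particular, no vertex group of a nontrivial amalgamated free product contains a subgroup of finite index in G. -/
open Monoid in
/-- Prepending a letter outside the base group to a reduced word. -/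
theorem reduced_cons_aux {H : Type*} [Group H] {ι : Type*} {G : ι → Type*} [∀ i, Group (G i)]
    (φ : ∀ i, H →* G i) {i : ι} (g : G i) (hg : g ∉ (φ i).range)
    (w : CoprodI.Word G) (hw : PushoutI.Reduced φ w) (hi : w.fstIdx ≠ some i) :
    ∃ w' : CoprodI.Word G, PushoutI.Reduced φ w' ∧ w'.fstIdx = some i ∧
      PushoutI.ofCoprodI (φ := φ) w'.prod
        = PushoutI.of i g * PushoutI.ofCoprodI (φ := φ) w.prod := by
  have hg1 : g ≠ 1 := by
    rintro rfl
    exact hg (one_mem _)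
  refine ⟨CoprodI.Word.cons g w hi hg1, ?_, ?_, ?_⟩
  · intro x hx
    simp only [CoprodI.Word.cons, List.mem_cons] at hx
    rcases hx with rfl | hx
    · exact hg
    · exact hw x hx
  · simp [CoprodI.Word.cons, CoprodI.Word.fstIdx]
  · simp [CoprodI.Word.prod_cons]

open Monoid in
theorem reduced_pow_aux {H : Type*} [Group H] {ι : Type*} {G : ι → Type*} [∀ i, Group (G i)]
    (φ : ∀ i, H →* G i) {i j : ι} (hij : i ≠ j) (a : G i) (ha : a ∉ (φ i).range)
    (b : G j) (hb : b ∉ (φ j).range) (n : ℕ) :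
    ∃ w : CoprodI.Word G, PushoutI.Reduced φ w ∧ w.fstIdx = some j ∧
      PushoutI.ofCoprodI (φ := φ) w.prod
        = PushoutI.of j b * (PushoutI.of i a * PushoutI.of j b) ^ n := by
  induction n with
  | zero =>
    obtain ⟨w, h1, h2, h3⟩ := reduced_cons_aux φ b hb CoprodI.Word.empty
      (by intro x hx; simp [CoprodI.Word.empty] at hx)
      (by simp [CoprodI.Word.empty, CoprodI.Word.fstIdx])
    exact ⟨w, h1, h2, by simpa using h3⟩
  | succ n ih =>
    obtain ⟨w, h1, h2, h3⟩ := ih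
    obtain ⟨v, k1, k2, k3⟩ := reduced_cons_aux φ a ha w h1
      (by rw [h2]; simpa using hij.symm)
    obtain ⟨u, l1, l2, l3⟩ := reduced_cons_aux φ b hb v k1
      (by rw [k2]; simpa using hij)
    refine ⟨u, l1, l2, ?_⟩
    rw [l3, k3, h3, pow_succ']
    simp only [mul_assoc]

/-- In a nontrivial amalgamated free product `G = G₁ ∗_H G₂` (the
homomorphisms `φ i : H →* G i` are injective and not surjective), the image of each
canonical homomorphism `of i : G i →* G` has infinite index in `G`. -/
theorem stmt11 {H : Type*} [Group H] {G : Fin 2 → Type*} [∀ i, Group (G i)]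
    (φ : ∀ i, H →* G i) (hinj : ∀ i, Function.Injective (φ i))
    (hnsurj : ∀ i, ¬ Function.Surjective (φ i)) (i : Fin 2) :
    (Monoid.PushoutI.of (φ := φ) i).range.index = 0 := by
  by_contra hidx
  obtain ⟨j, hij⟩ : ∃ j : Fin 2, i ≠ j := ⟨i + 1, by clear hidx; revert i; decide⟩
  have hex : ∀ k, ∃ a : G k, a ∉ (φ k).range := by
    intro k
    by_contra! hcon
    exact hnsurj k fun y => hcon y
  obtain ⟨a, ha⟩ := hex i
  obtain ⟨b, hb⟩ := hex j
  obtain ⟨n, hn0, -, hn⟩ := Subgroup.exists_pow_mem_of_index_ne_zero hidx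
    (Monoid.PushoutI.of (φ := φ) i a * Monoid.PushoutI.of j b)
  obtain ⟨m, rfl⟩ : ∃ m, n = m + 1 := ⟨n - 1, by omega⟩
  obtain ⟨w, h1, h2, h3⟩ := reduced_pow_aux φ hij a ha b hb m
  have hmem : Monoid.PushoutI.ofCoprodI (φ := φ) w.prod ∈
      (Monoid.PushoutI.of (φ := φ) i).range := by
    rw [pow_succ', mul_assoc, ← h3] at hn
    exact (Subgroup.mul_mem_cancel_left _ (MonoidHom.mem_range.2 ⟨a, rfl⟩)).1 hn
  obtain ⟨g, hg⟩ := hmem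
  by_cases hgr : g ∈ (φ i).range
  · obtain ⟨h, rfl⟩ := hgr
    have := h1.eq_empty_of_mem_range hinj
      ⟨h, by rw [← hg, Monoid.PushoutI.of_apply_eq_base]⟩
    rw [this] at h2
    simp [Monoid.CoprodI.Word.empty, Monoid.CoprodI.Word.fstIdx] at h2
  · obtain ⟨v, k1, k2, k3⟩ := reduced_cons_aux φ g⁻¹ (by simpa using hgr) w h1
      (by rw [h2]; simpa using hij.symm)
    have := k1.eq_empty_of_mem_range hinj
      (by rw [k3, ← hg, ← map_mul, inv_mul_cancel, map_one]; exact one_mem _)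
    rw [this] at k2
    simp [Monoid.CoprodI.Word.empty, Monoid.CoprodI.Word.fstIdx] at k2
end

section
/- Let G be a finitely presented group admitting a surjective homomorphism ε : G → ℤ. Then there exist a finitely generated subgroup A of G with A ≤ ker ε, subgroups B, C of A, and an isomorphism ψ : B ≃ C, such that G is isomorphic to the HNN extension of A over ψ by an isomorphism that carries the canonical copy of A inside the HNN extension to the inclusion of A in G. -/
/-- A group is finitely presented if it is isomorphic to the quotient of a free group of
finite rank by the normal closure of a finite set of relators. -/
def IsFinitelyPresented (G : Type*) [Group G] : Prop :=
  ∃ (n : ℕ) (R : Set (FreeGroup (Fin n))), R.Finite ∧ Nonempty (G ≃* PresentedGroup R)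

namespace HNNSplit

variable {G : Type*} [Group G]

/-- The elements of `A` whose conjugate by `t` is again in `A`. -/
def conjSub (t : G) (A : Subgroup G) : Subgroup A :=
  (A.comap (MulAut.conj t).toMonoidHom).subgroupOf A

theorem mem_conjSub {t : G} {A : Subgroup G} {a : A} :
    a ∈ conjSub t A ↔ t * (a : G) * t⁻¹ ∈ A := by
  simp [conjSub, Subgroup.mem_subgroupOf]

/-- Conjugation by `t`. -/
def conjIso (t : G) (A : Subgroup G) : conjSub t A ≃* conjSub t⁻¹ A where
  toFun a := ⟨⟨t * ((a : A) : G) * t⁻¹, mem_conjSub.1 a.2⟩, by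
    rw [mem_conjSub]; simp [mul_assoc]⟩
  invFun a := ⟨⟨t⁻¹ * ((a : A) : G) * t, by simpa using mem_conjSub.1 a.2⟩, by
    rw [mem_conjSub]; simp [mul_assoc]⟩
  left_inv a := by ext; simp [mul_assoc]
  right_inv a := by ext; simp [mul_assoc]
  map_mul' a b := by ext; simp [mul_assoc]

/-- The HNN extension. -/
abbrev HN (t : G) (A : Subgroup G) := HNNExtension A (conjSub t A) (conjSub t⁻¹ A) (conjIso t A)

/-- The stable letter. -/
abbrev TT (t : G) (A : Subgroup G) : HN t A := HNNExtension.t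

/-- The embedding. -/
abbrev ofA (t : G) (A : Subgroup G) : A →* HN t A := HNNExtension.of

theorem step (t : G) (A : Subgroup G) (a b : A) (h : (b : G) = t * a * t⁻¹) :
    ofA t A b = TT t A * ofA t A a * (TT t A)⁻¹ := by
  have ha : a ∈ conjSub t A := by rw [mem_conjSub, ← h]; exact b.2
  have := HNNExtension.equiv_eq_conj (φ := conjIso t A) ⟨a, ha⟩
  rw [← this]
  congr 1
  ext
  exact h

theorem steps_nat (t : G) (A : Subgroup G) (k : ℕ) : ∀ (a b : A),
    (∀ j : ℕ, j ≤ k → t ^ j * (a : G) * (t ^ j)⁻¹ ∈ A) →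
    ((b : G) = t ^ k * a * (t ^ k)⁻¹) →
    ofA t A b = (TT t A) ^ k * ofA t A a * ((TT t A) ^ k)⁻¹ := by
  induction k with
  | zero => intro a b _ h; simp at h ⊢; rw [h]
  | succ k ih =>
    intro a b H h
    have h1 := ih a ⟨_, H k (by omega)⟩ (fun j hj => H j (by omega)) rfl
    have h2 := step t A ⟨_, H k (by omega)⟩ b (by rw [h, pow_succ']; group)
    rw [h2, h1, pow_succ']
    group

theorem steps (t : G) (A : Subgroup G) (k : ℤ) (a b : A)
    (H : ∀ j : ℤ, |j| ≤ |k| → t ^ j * (a : G) * (t ^ j)⁻¹ ∈ A)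
    (h : (b : G) = t ^ k * a * (t ^ k)⁻¹) :
    ofA t A b = (TT t A) ^ k * ofA t A a * ((TT t A) ^ k)⁻¹ := by
  obtain ⟨n, rfl | rfl⟩ := k.eq_nat_or_neg
  · simp only [zpow_natCast] at h ⊢
    refine steps_nat t A n a b (fun j hj => ?_) h
    have := H j (by simpa using hj)
    simpa using this
  · have h' : (a : G) = t ^ n * b * (t ^ n)⁻¹ := by
      rw [h]; simp [mul_assoc]
    have := steps_nat t A n b a (fun j hj => ?_) h'
    · rw [this]; simp [mul_assoc]
    · have := H ((j : ℤ) - n) (by rw [abs_neg]; rw [abs_le]; simp; omega)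
      rw [h]
      convert this using 1
      rw [zpow_sub]
      simp [mul_assoc]

/-- Compatible normal forms for `g` and `h`. -/
def Good (t : G) (A : Subgroup G) (g : G) (h : HN t A) : Prop :=
  ∃ (a : A) (k : ℤ), g = a * t ^ k ∧ h = ofA t A a * (TT t A) ^ k

/-- The conjugates `t ^ j * a * t ^ (-j)` with `|j| ≤ |k|`. -/
def conjs (t : G) (k : ℤ) (a : G) : Set G :=
  (fun j : ℤ => t ^ j * a * (t ^ j)⁻¹) '' Set.Icc (-|k|) |k|

theorem conjs_finite (t : G) (k : ℤ) (a : G) : (conjs t k a).Finite :=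
  (Set.finite_Icc _ _).image _

theorem mem_conjs {t : G} {k : ℤ} {a : G} {j : ℤ} (h : |j| ≤ |k|) :
    t ^ j * a * (t ^ j)⁻¹ ∈ conjs t k a :=
  ⟨j, abs_le.1 h, rfl⟩

theorem self_mem_conjs (t : G) (k : ℤ) (a : G) : a ∈ conjs t k a := by
  have := mem_conjs (t := t) (k := k) (a := a) (j := 0) (by simp)
  simpa using this

theorem good_mul {t : G} {A : Subgroup G} {g g' : G} {h h' : HN t A} {a a' : A} {k k' : ℤ}
    (hg : g = a * t ^ k) (hh : h = ofA t A a * (TT t A) ^ k)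
    (hg' : g' = a' * t ^ k') (hh' : h' = ofA t A a' * (TT t A) ^ k')
    (H : conjs t k (a' : G) ⊆ A) : Good t A (g * g') (h * h') := by
  have H' : ∀ j : ℤ, |j| ≤ |k| → t ^ j * (a' : G) * (t ^ j)⁻¹ ∈ A := fun j hj => H (mem_conjs hj)
  have := steps t A k a' ⟨_, H' k le_rfl⟩ H' rfl
  refine ⟨a * ⟨_, H' k le_rfl⟩, k + k', ?_, ?_⟩
  · rw [hg, hg', zpow_add]; simp [mul_assoc]
  · rw [map_mul, this, hh, hh', zpow_add]; simp [mul_assoc]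

theorem good_inv {t : G} {A : Subgroup G} {g : G} {h : HN t A} {a : A} {k : ℤ}
    (hg : g = a * t ^ k) (hh : h = ofA t A a * (TT t A) ^ k)
    (H : conjs t k (a : G) ⊆ A) : Good t A (g⁻¹) (h⁻¹) := by
  have H' : ∀ j : ℤ, |j| ≤ |-k| → t ^ j * (a : G) * (t ^ j)⁻¹ ∈ A :=
    fun j hj => H (mem_conjs (by simpa using hj))
  have := steps t A (-k) a ⟨_, H' (-k) le_rfl⟩ H' rfl
  refine ⟨⟨_, H' (-k) le_rfl⟩⁻¹, -k, ?_, ?_⟩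
  · rw [hg]; simp [mul_assoc]
  · rw [map_inv, this, hh]; simp [mul_assoc]

/-- In any large enough `A`, `s` is the identity on `E`. -/
def Fixed (t : G) (ε : G →* Multiplicative ℤ) (X : Set G) (E : Set G) : Prop :=
  ∀ A : Subgroup G, A ≤ ε.ker → E ⊆ A → ∀ s : G →* HN t A, s t = TT t A →
    (∀ x ∈ X, Good t A x (s x)) → ∀ a : A, (a : G) ∈ E → s a = ofA t A a

theorem fixed_union {t : G} {ε : G →* Multiplicative ℤ} {X E E' : Set G}
    (h : Fixed t ε X E) (h' : Fixed t ε X E') : Fixed t ε X (E ∪ E') := by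
  intro A hA hE s hs hX a ha
  rcases ha with ha | ha
  · exact h A hA (fun x hx => hE (Or.inl hx)) s hs hX a ha
  · exact h' A hA (fun x hx => hE (Or.inr hx)) s hs hX a ha

theorem exp_eq {t : G} {ε : G →* Multiplicative ℤ} (ht : ε t = Multiplicative.ofAdd 1)
    {A : Subgroup G} (hA : A ≤ ε.ker) {g : G} {a : A} {k : ℤ} (h : g = a * t ^ k) :
    k = (ε g).toAdd := by
  have : ε (a : G) = 1 := hA a.2
  rw [h, map_mul, this, map_zpow, ht]
  simp

/-- Fixedness for conjugates. -/
theorem fixed_conjs {t : G} {A : Subgroup G} {a : A} {k : ℤ} {s : G →* HN t A}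
    (hs : s t = TT t A) (hsa : s a = ofA t A a) (H : conjs t k (a : G) ⊆ A)
    (b : A) (hb : (b : G) ∈ conjs t k (a : G)) : s b = ofA t A b := by
  obtain ⟨j, hj, hjb⟩ := hb
  have hj' : |j| ≤ |k| := abs_le.2 hj
  have := steps t A j a b (fun i hi => H (mem_conjs (hi.trans hj'))) hjb.symm
  rw [this, ← hjb]
  simp [hs, hsa]

/-- The finiteness statement proved by induction on words. -/
def WordOK {ι : Type*} (t : G) (ε : G →* Multiplicative ℤ) (π : FreeGroup ι →* G)
    (w : FreeGroup ι) : Prop :=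
  ∃ E : Set G, E.Finite ∧ E ⊆ (ε.ker : Set G) ∧
    Fixed t ε (Set.range fun i => π (FreeGroup.of i)) E ∧
    ∀ A : Subgroup G, A ≤ ε.ker → E ⊆ A → ∀ f : FreeGroup ι →* HN t A,
      (∀ i, Good t A (π (FreeGroup.of i)) (f (FreeGroup.of i))) → Good t A (π w) (f w)

/-- The kernel part of `g`. -/
def kp (t : G) (ε : G →* Multiplicative ℤ) (g : G) : G := g * (t ^ (ε g).toAdd)⁻¹

theorem kp_mem {t : G} {ε : G →* Multiplicative ℤ} (ht : ε t = Multiplicative.ofAdd 1) (g : G) :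
    kp t ε g ∈ ε.ker := by
  rw [MonoidHom.mem_ker, kp, map_mul, map_inv, map_zpow, ht, ← ofAdd_zsmul]
  simp

theorem conjs_ker {t : G} {ε : G →* Multiplicative ℤ} {k : ℤ} {a : G} (h : a ∈ ε.ker) :
    conjs t k a ⊆ (ε.ker : Set G) := by
  rintro _ ⟨j, _, rfl⟩
  exact (MonoidHom.normal_ker ε).conj_mem a h _

theorem kp_eq {t : G} {ε : G →* Multiplicative ℤ} (ht : ε t = Multiplicative.ofAdd 1)
    {A : Subgroup G} (hA : A ≤ ε.ker) {g : G} {a : A} {k : ℤ} (h : g = a * t ^ k) :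
    (a : G) = kp t ε g := by
  rw [kp, ← exp_eq ht hA h, h]; simp

/-- Adding conjugates of the kernel part of a good word. -/
theorem fixed_add {ι : Type*} {t : G} {ε : G →* Multiplicative ℤ} {π : FreeGroup ι →* G}
    (ht : ε t = Multiplicative.ofAdd 1) {w : FreeGroup ι} {E : Set G}
    (hF : Fixed t ε (Set.range fun i => π (FreeGroup.of i)) E)
    (hG : ∀ A : Subgroup G, A ≤ ε.ker → E ⊆ A → ∀ f : FreeGroup ι →* HN t A,
      (∀ i, Good t A (π (FreeGroup.of i)) (f (FreeGroup.of i))) → Good t A (π w) (f w)) (k : ℤ) :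
    Fixed t ε (Set.range fun i => π (FreeGroup.of i)) (E ∪ conjs t k (kp t ε (π w))) := by
  intro A hA hE s hs hX a ha
  have hE1 : E ⊆ A := fun x hx => hE (Or.inl hx)
  rcases ha with ha | ha
  · exact hF A hA hE1 s hs hX a ha
  · obtain ⟨c, l, h1, h2⟩ := hG A hA hE1 (s.comp π) (fun i => hX _ ⟨i, rfl⟩)
    have hc := kp_eq ht hA h1
    rw [← hc] at ha hE
    refine fixed_conjs hs ?_ (fun x hx => hE (Or.inr hx)) a ha
    rw [MonoidHom.comp_apply, h1, map_mul, map_zpow, hs] at h2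
    exact mul_right_cancel h2

theorem wordOK {ι : Type*} {t : G} {ε : G →* Multiplicative ℤ} (π : FreeGroup ι →* G)
    (ht : ε t = Multiplicative.ofAdd 1) (w : FreeGroup ι) : WordOK t ε π w := by
  have hinv : ∀ w, WordOK t ε π w → WordOK t ε π w⁻¹ := by
    rintro w ⟨E, hfin, hker, hF, hG⟩
    refine ⟨E ∪ conjs t (ε (π w)).toAdd (kp t ε (π w)), hfin.union (conjs_finite _ _ _),
      Set.union_subset hker (conjs_ker (kp_mem ht _)), fixed_add ht hF hG _, ?_⟩
    intro A hA hE f hf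
    obtain ⟨a, k, h1, h2⟩ := hG A hA (fun x hx => hE (Or.inl hx)) f hf
    rw [map_inv, map_inv]
    refine good_inv h1 h2 ?_
    rw [kp_eq ht hA h1, exp_eq ht hA h1]
    exact fun x hx => hE (Or.inr hx)
  have hof : ∀ i, WordOK t ε π (FreeGroup.of i) := fun i =>
    ⟨∅, Set.finite_empty, Set.empty_subset _, fun A hA hE s hs hX a ha => ha.elim,
      fun A hA hE f hf => hf i⟩
  induction w using FreeGroup.induction_on with
  | C1 =>
    exact ⟨∅, Set.finite_empty, Set.empty_subset _, fun A hA hE s hs hX a ha => ha.elim,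
      fun A hA hE f hf => ⟨1, 0, by simp, by simp⟩⟩
  | of i => exact hof i
  | inv_of i h => exact hinv _ h
  | mul x y hx hy =>
    obtain ⟨E, hfin, hker, hF, hG⟩ := hx
    obtain ⟨E', hfin', hker', hF', hG'⟩ := hy
    refine ⟨E ∪ (E' ∪ conjs t (ε (π x)).toAdd (kp t ε (π y))),
      hfin.union (hfin'.union (conjs_finite _ _ _)),
      Set.union_subset hker (Set.union_subset hker' (conjs_ker (kp_mem ht _))),
      fixed_union hF (fixed_add ht hF' hG' _), ?_⟩
    intro A hA hE f hf
    obtain ⟨a, k, h1, h2⟩ := hG A hA (fun x hx => hE (Or.inl hx)) f hf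
    obtain ⟨a', k', h1', h2'⟩ := hG' A hA (fun x hx => hE (Or.inr (Or.inl hx))) f hf
    rw [map_mul, map_mul]
    refine good_mul h1 h2 h1' h2' ?_
    rw [kp_eq ht hA h1', exp_eq ht hA h1]
    exact fun x hx => hE (Or.inr (Or.inr hx))

/-- The natural map from the HNN extension. -/
noncomputable def toG (t : G) (A : Subgroup G) : HN t A →* G :=
  HNNExtension.lift A.subtype t (by intro a; simp [conjIso])

theorem toG_of (t : G) (A : Subgroup G) (a : A) : toG t A (ofA t A a) = a :=
  HNNExtension.lift_of _ _ _ _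

theorem toG_t (t : G) (A : Subgroup G) : toG t A (TT t A) = t :=
  HNNExtension.lift_t _ _ _

theorem toG_good {t : G} {A : Subgroup G} {g : G} {h : HN t A} (H : Good t A g h) :
    toG t A h = g := by
  obtain ⟨a, k, rfl, rfl⟩ := H
  rw [map_mul, map_zpow, toG_of, toG_t]

theorem main {n : ℕ} {R : Set (FreeGroup (Fin n))} (hR : R.Finite) (π : FreeGroup (Fin n) →* G)
    (hπ : Function.Surjective π) (hker : π.ker = Subgroup.normalClosure R)
    {t : G} {ε : G →* Multiplicative ℤ} (ht : ε t = Multiplicative.ofAdd 1) :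
    ∃ A : Subgroup G, A.FG ∧ A ≤ ε.ker ∧ ∃ θ : HN t A ≃* G,
      θ.toMonoidHom.comp (ofA t A) = A.subtype := by
  choose E hfin hEker hF hG using wordOK (t := t) (ε := ε) π ht
  obtain ⟨wt, hwt⟩ := hπ t
  let Y : Set G := Set.range fun i : Fin n => kp t ε (π (FreeGroup.of i))
  let S : Set G := Y ∪ (E wt ∪ ⋃ r ∈ R, E r)
  have hSfin : S.Finite :=
    (Set.finite_range _).union ((hfin wt).union (hR.biUnion fun r _ => hfin r))
  have hSker : S ⊆ (ε.ker : Set G) := by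
    refine Set.union_subset ?_ (Set.union_subset (hEker wt) (Set.iUnion₂_subset fun r _ => hEker r))
    rintro _ ⟨i, rfl⟩
    exact kp_mem ht _
  let A : Subgroup G := Subgroup.closure S
  have hA : A ≤ ε.ker := (Subgroup.closure_le _).2 hSker
  have hSA : S ⊆ A := Subgroup.subset_closure
  have hYA : ∀ i, kp t ε (π (FreeGroup.of i)) ∈ A := fun i => hSA (Or.inl ⟨i, rfl⟩)
  have hwA : E wt ⊆ A := fun x hx => hSA (Or.inr (Or.inl hx))
  have hrA : ∀ r ∈ R, E r ⊆ A := fun r hr x hx =>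
    hSA (Or.inr (Or.inr (Set.mem_biUnion hr hx)))
  let f : FreeGroup (Fin n) →* HN t A := FreeGroup.lift fun i =>
    ofA t A ⟨_, hYA i⟩ * (TT t A) ^ (ε (π (FreeGroup.of i))).toAdd
  have hf : ∀ i, Good t A (π (FreeGroup.of i)) (f (FreeGroup.of i)) := fun i =>
    ⟨⟨_, hYA i⟩, (ε (π (FreeGroup.of i))).toAdd, by simp [kp], by simp [f]⟩
  have hfR : π.ker ≤ f.ker := by
    rw [hker]
    refine Subgroup.normalClosure_le_normal fun r hr => ?_
    obtain ⟨a, k, h1, h2⟩ := hG r A hA (hrA r hr) f hf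
    have hr1 : π r = 1 := by
      rw [← MonoidHom.mem_ker, hker]; exact Subgroup.subset_normalClosure hr
    have hk := exp_eq ht hA h1
    rw [hr1] at hk h1
    simp at hk
    subst hk
    simp at h1
    have : a = 1 := by ext; exact h1.symm
    subst this
    change f r = 1
    simp [h2]
  let s : G →* HN t A := π.liftOfSurjective hπ ⟨f, hfR⟩
  have hs : ∀ w, s (π w) = f w := fun w =>
    MonoidHom.liftOfRightInverse_comp_apply π _ (Function.rightInverse_surjInv hπ) ⟨f, hfR⟩ w
  have hst : s t = TT t A := by
    obtain ⟨a, k, h1, h2⟩ := hG wt A hA hwA f hf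
    rw [← hs] at h2
    rw [hwt] at h1 h2
    have hk := exp_eq ht hA h1
    rw [ht] at hk
    simp at hk
    subst hk
    simp at h1
    subst h1
    simpa using h2
  have hsX : ∀ x ∈ Set.range fun i => π (FreeGroup.of i), Good t A x (s x) := by
    rintro _ ⟨i, rfl⟩
    simp only [hs]; exact hf i
  have hsS : ∀ a : A, (a : G) ∈ S → s a = ofA t A a := by
    rintro a (⟨i, hi⟩ | ha | ha)
    · simp only at hi
      rw [← hi, kp, map_mul, map_inv, map_zpow, hst, hs]
      have : a = ⟨_, hYA i⟩ := by ext; exact hi.symm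
      rw [this]
      simp [f]
    · exact hF wt A hA hwA s hst hsX a ha
    · obtain ⟨r, hr, ha⟩ := Set.mem_iUnion₂.1 ha
      exact hF r A hA (hrA r hr) s hst hsX a ha
  have hsA : ∀ (g : G) (hg : g ∈ A), s g = ofA t A ⟨g, hg⟩ := by
    intro g hg
    induction hg using Subgroup.closure_induction with
    | mem x hx => exact hsS ⟨x, hSA hx⟩ hx
    | one => rw [map_one]; exact (map_one (ofA t A)).symm
    | mul x y hx hy h1 h2 => rw [map_mul, h1, h2, ← map_mul]; rfl
    | inv x hx h1 => rw [map_inv, h1, ← map_inv]; rfl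
  have c1 : s.comp (toG t A) = MonoidHom.id _ := by
    apply HNNExtension.hom_ext
    · ext a
      change s (toG t A (ofA t A a)) = ofA t A a
      rw [toG_of]
      exact hsA a a.2
    · change s (toG t A (TT t A)) = TT t A
      rw [toG_t]
      exact hst
  have c2 : (toG t A).comp s = MonoidHom.id _ := by
    rw [← MonoidHom.cancel_right hπ]
    ext i
    exact toG_good (hsX _ ⟨i, rfl⟩)
  refine ⟨A, ⟨hSfin.toFinset, by simp [A]⟩, hA, MonoidHom.toMulEquiv (toG t A) s c1 c2, ?_⟩
  ext a
  exact toG_of t A a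

end HNNSplit

/-- A finitely presented group `G` with a surjection `ε` onto `ℤ`
splits as an HNN extension of a finitely generated subgroup `A ≤ ker ε`, over an
isomorphism `ψ` between two subgroups `B, C` of `A`; the isomorphism of the HNN
extension with `G` carries the canonical copy of `A` to the inclusion `A ≤ G`. -/
theorem stmt12 {G : Type*} [Group G] (hfp : IsFinitelyPresented G)
    (ε : G →* Multiplicative ℤ) (hsurj : Function.Surjective ε) :
    ∃ A : Subgroup G, A.FG ∧ A ≤ ε.ker ∧
      ∃ (B C : Subgroup A) (ψ : B ≃* C) (θ : HNNExtension A B C ψ ≃* G),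
        θ.toMonoidHom.comp HNNExtension.of = A.subtype := by
  obtain ⟨n, R, hR, ⟨e⟩⟩ := hfp
  obtain ⟨t, ht⟩ := hsurj (Multiplicative.ofAdd 1)
  obtain ⟨A, h1, h2, θ, h3⟩ := HNNSplit.main hR (e.symm.toMonoidHom.comp (PresentedGroup.mk R))
    (e.symm.surjective.comp (PresentedGroup.mk_surjective R))
    (by ext x; simp [MonoidHom.mem_ker, PresentedGroup.mk_eq_one_iff]) ht
  exact ⟨A, h1, h2, _, _, _, θ, h3⟩
end

section
/- Let G be a finitely presented group and ε : G → ℤ a surjective homomorphism whose kernel N is locally finite, meaning every finitely generated subgroup of N is finite. Then N is finite. That is, every finitely presented (locally finite)-by-ℤ group is (finite)-by-ℤ. -/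
namespace Stmt13Aux

open HNNExtension HNNExtension.NormalWord

section Britton

variable {K : Type*} [Group K] {A B : Subgroup K} {φ : A ≃* B}

/-- The syllables of the word `(t h t⁻¹ h')^n`. -/
def wordList (h h' : K) : ℕ → List (ℤˣ × K)
  | 0 => []
  | n + 1 => (1, h) :: (-1, h') :: wordList h h' n

lemma wordList_not_mem (h h' : K) (hA : h ∉ A) (hB : h' ∉ B) (n : ℕ) :
    ∀ a ∈ wordList h h' n, a.2 ∉ toSubgroup A B a.1 := by
  induction n with
  | zero => simp [wordList]
  | succ n ih =>
    intro a ha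
    simp only [wordList, List.mem_cons] at ha
    rcases ha with rfl | rfl | ha
    · simpa using hA
    · simpa using hB
    · exact ih a ha

lemma chain_of_forall (L : List (ℤˣ × K)) (hL : ∀ a ∈ L, a.2 ∉ toSubgroup A B a.1) :
    L.IsChain (fun a b => a.2 ∈ toSubgroup A B a.1 → a.1 = b.1) := by
  induction L with
  | nil => exact List.isChain_nil
  | cons a L ih =>
    rw [List.isChain_cons]
    refine ⟨fun b _ hmem => absurd hmem (hL a (by simp)), ih fun b hb => hL b (by simp [hb])⟩

lemma wordList_prod (h h' : K) (n : ℕ) :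
    ((wordList h h' n).map
      (fun x => (t : HNNExtension K A B φ) ^ (x.1 : ℤ) * of x.2)).prod
      = (t * of h * t⁻¹ * of h') ^ n := by
  induction n with
  | zero => simp [wordList]
  | succ n ih =>
    simp only [wordList, List.map_cons, List.prod_cons, ih, pow_succ']
    simp [mul_assoc]

lemma pow_ne_one (h h' : K) (hA : h ∉ A) (hB : h' ∉ B) (n : ℕ) (hn : n ≠ 0) :
    ((t : HNNExtension K A B φ) * of h * t⁻¹ * of h') ^ n ≠ 1 := by
  intro h1
  let w : ReducedWord K A B :=
    ⟨1, wordList h h' n, chain_of_forall _ (wordList_not_mem h h' hA hB n)⟩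
  have hw : w.prod φ = 1 := by
    simp only [ReducedWord.prod, w, map_one, one_mul]
    rw [wordList_prod, h1]
  have := ReducedWord.toList_eq_nil_of_mem_of_range φ w (by rw [hw]; exact one_mem _)
  obtain ⟨m, rfl⟩ := Nat.exists_eq_succ_of_ne_zero hn
  simp [w, wordList] at this

end Britton

section Conj

variable {G : Type*} [Group G]

/-- Elements of `H` whose conjugate by `t` is in `H`. -/
def cA (H : Subgroup G) (s : G) : Subgroup H :=
  Subgroup.comap H.subtype (Subgroup.comap (MulAut.conj s).toMonoidHom H)

lemma mem_cA {H : Subgroup G} {s : G} {x : H} : x ∈ cA H s ↔ s * x * s⁻¹ ∈ H := Iff.rfl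

/-- Conjugation by `t`. -/
def cφ (H : Subgroup G) (s : G) : cA H s ≃* cA H s⁻¹ where
  toFun a := ⟨⟨s * a * s⁻¹, mem_cA.1 a.2⟩, by rw [mem_cA]; simp [mul_assoc]⟩
  invFun a := ⟨⟨s⁻¹ * a * s, by simpa using mem_cA.1 a.2⟩, by rw [mem_cA]; simp [mul_assoc]⟩
  left_inv a := by ext; simp [mul_assoc]
  right_inv a := by ext; simp [mul_assoc]
  map_mul' a b := by ext; simp [mul_assoc]

/-- The HNN extension attached to `H` and `t`. -/
abbrev E (H : Subgroup G) (s : G) := HNNExtension H (cA H s) (cA H s⁻¹) (cφ H s)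

/-- The natural map to `G`. -/
def toG (H : Subgroup G) (s : G) : E H s →* G :=
  HNNExtension.lift H.subtype s (by intro a; simp [cφ])

lemma toG_of (H : Subgroup G) (s : G) (h : H) : toG H s (of h) = h := HNNExtension.lift_of _ _ _ _

lemma toG_t (H : Subgroup G) (s : G) : toG H s t = s := HNNExtension.lift_t _ _ _

lemma conj_step (H : Subgroup G) (s : G) (h h' : H) (hh : (h' : G) = s * h * s⁻¹) :
    (t : E H s) * of h * t⁻¹ = of h' := by
  have hm : h ∈ cA H s := by rw [mem_cA, ← hh]; exact h'.2
  have := equiv_eq_conj (φ := cφ H s) ⟨h, hm⟩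
  rw [← this]
  congr 1
  ext
  simp [cφ, hh]

lemma conj_zpow (H : Subgroup G) (s x : G) (k : ℕ)
    (hx : ∀ j : ℤ, |j| ≤ k → s ^ j * x * s ^ (-j) ∈ H) (x' : H) (hx' : (x' : G) = x) :
    ∀ (j : ℤ) (hj : |j| ≤ k),
      (t : E H s) ^ j * of x' * t ^ (-j) = of ⟨_, hx j hj⟩ := by
  intro j
  induction j with
  | zero => intro hj; simp [← hx']
  | succ n ih =>
    intro hj
    have hj' : |(n : ℤ)| ≤ k := by rw [abs_le] at *; omega
    rw [← conj_step H s ⟨_, hx n hj'⟩ ⟨_, hx _ hj⟩, ← ih hj']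
    · group
    · simp only []; group
  | pred n ih =>
    intro hj
    have hj' : |(-n : ℤ)| ≤ k := by rw [abs_le] at *; omega
    have := conj_step H s ⟨_, hx _ hj⟩ ⟨_, hx _ hj'⟩ (by simp only []; group)
    rw [← ih hj'] at this
    rw [mul_inv_eq_iff_eq_mul, ← eq_inv_mul_iff_mul_eq] at this
    rw [this]
    group

end Conj

section Main

variable {G : Type*} [Group G] {n : ℕ}

/-- The exponent of an element. -/
def ex (ε : G →* Multiplicative ℤ) (g : G) : ℤ := (ε g).toAdd

/-- The component in the kernel of a generator. -/
def gen (q : FreeGroup (Fin n) →* G) (ε : G →* Multiplicative ℤ) (s : G) (i : Fin n) : G :=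
  q (FreeGroup.of i) * s ^ (-(ex ε (q (FreeGroup.of i))))

/-- The subgroup generated by finitely many conjugates of the generators. -/
def HH (q : FreeGroup (Fin n) →* G) (ε : G →* Multiplicative ℤ) (s : G) (k : ℕ) : Subgroup G :=
  Subgroup.closure
    ((fun p : Fin n × ℤ => s ^ p.2 * gen q ε s p.1 * s ^ (-p.2)) '' {p | |p.2| ≤ k})

variable (q : FreeGroup (Fin n) →* G) (ε : G →* Multiplicative ℤ) (s : G)

lemma mem_HH (k : ℕ) (i : Fin n) (j : ℤ) (hj : |j| ≤ k) :
    s ^ j * gen q ε s i * s ^ (-j) ∈ HH q ε s k :=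
  Subgroup.subset_closure ⟨(i, j), hj, rfl⟩

lemma gen_mem (k : ℕ) (i : Fin n) : gen q ε s i ∈ HH q ε s k := by
  simpa using mem_HH q ε s k i 0 (by simp)

lemma HH_fg (k : ℕ) : (HH q ε s k).FG := by
  rw [Subgroup.fg_iff]
  refine ⟨_, rfl, Set.Finite.image _ ?_⟩
  refine ((Set.finite_univ (α := Fin n)).prod (Set.finite_Icc (-(k : ℤ)) k)).subset ?_
  rintro ⟨i, j⟩ h
  simpa [abs_le] using h

lemma HH_le (hs : ε s = Multiplicative.ofAdd 1) (k : ℕ) : HH q ε s k ≤ ε.ker := by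
  rw [HH, Subgroup.closure_le]
  rintro _ ⟨⟨i, j⟩, -, rfl⟩
  simp only [SetLike.mem_coe, MonoidHom.mem_ker, gen, ex]
  apply Multiplicative.toAdd.injective
  simp [hs]

/-- The lift of `q` to the HNN extension. -/
def ff (k : ℕ) : FreeGroup (Fin n) →* E (HH q ε s k) s :=
  FreeGroup.lift fun i => of ⟨gen q ε s i, gen_mem q ε s k i⟩ * t ^ ex ε (q (FreeGroup.of i))

lemma ff_of (k : ℕ) (i : Fin n) : ff q ε s k (FreeGroup.of i) =
    of ⟨gen q ε s i, gen_mem q ε s k i⟩ * t ^ ex ε (q (FreeGroup.of i)) := by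
  simp [ff]

lemma toG_ff (k : ℕ) (w : FreeGroup (Fin n)) : toG _ s (ff q ε s k w) = q w := by
  have : (toG _ s).comp (ff q ε s k) = q := by
    ext i
    simp [ff_of, toG_of, toG_t, gen]
  exact DFunLike.congr_fun this w

lemma conj_gen (k : ℕ) (i : Fin n) (j : ℤ) (hj : |j| ≤ k) :
    (t : E (HH q ε s k) s) ^ j * of ⟨gen q ε s i, gen_mem q ε s k i⟩ * t ^ (-j) =
      of ⟨_, mem_HH q ε s k i j hj⟩ :=
  conj_zpow (HH q ε s k) s (gen q ε s i) k (fun j hj => mem_HH q ε s k i j hj) _ rfl j hj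

/-- Normal form property. -/
def Q (w : FreeGroup (Fin n)) : Prop :=
  ∃ k₀ : ℕ, ∀ k ≥ k₀, ∃ h : HH q ε s k, ff q ε s k w = of h * t ^ ex ε (q w)

lemma Q_mul (y : FreeGroup (Fin n)) : ∀ x, Q q ε s x → Q q ε s (x * y) := by
  induction y using FreeGroup.induction_on with
  | C1 => intro x hx; simpa using hx
  | of i =>
    rintro x ⟨k₀, hk₀⟩
    refine ⟨max k₀ (ex ε (q x)).natAbs, fun k hk => ?_⟩
    obtain ⟨h, hh⟩ := hk₀ k (le_trans (le_max_left _ _) hk)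
    have hj : |ex ε (q x)| ≤ k := by
      have := le_trans (le_max_right _ _) hk
      rw [Int.abs_eq_natAbs]; exact_mod_cast this
    refine ⟨h * ⟨_, mem_HH q ε s k i _ hj⟩, ?_⟩
    rw [map_mul, map_mul, ← conj_gen q ε s k i _ hj, hh, ff_of]
    have : ex ε (q (x * FreeGroup.of i)) = ex ε (q x) + ex ε (q (FreeGroup.of i)) := by
      simp [ex]
    rw [this, zpow_add, zpow_neg]
    simp [mul_assoc]
  | inv_of i _ =>
    rintro x ⟨k₀, hk₀⟩
    set m := ex ε (q x) - ex ε (q (FreeGroup.of i)) with hm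
    refine ⟨max k₀ m.natAbs, fun k hk => ?_⟩
    obtain ⟨h, hh⟩ := hk₀ k (le_trans (le_max_left _ _) hk)
    have hj : |m| ≤ k := by
      have := le_trans (le_max_right _ _) hk
      rw [Int.abs_eq_natAbs]; exact_mod_cast this
    refine ⟨h * ⟨_, mem_HH q ε s k i _ hj⟩⁻¹, ?_⟩
    rw [map_mul, map_mul, map_inv, map_inv, ← conj_gen q ε s k i _ hj, hh, ff_of]
    have : ex ε (q (x * (FreeGroup.of i)⁻¹)) = m := by
      simp [ex, hm, sub_eq_add_neg]
    rw [this, hm]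
    group
  | mul a b ha hb =>
    intro x hx
    rw [← mul_assoc]
    exact hb _ (ha _ hx)

lemma Q_all (w : FreeGroup (Fin n)) : Q q ε s w := by
  have := Q_mul q ε s w 1 ⟨0, fun k _ => ⟨1, by simp [ex]⟩⟩
  simpa using this

lemma eventually_eq (w : FreeGroup (Fin n)) :
    ∃ k₀ : ℕ, ∀ k ≥ k₀, ∀ m : ℤ, ex ε (q w) = m → q w = s ^ m → ff q ε s k w = t ^ m := by
  obtain ⟨k₀, hk₀⟩ := Q_all q ε s w
  refine ⟨k₀, fun k hk m hm hw => ?_⟩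
  obtain ⟨h, hh⟩ := hk₀ k hk
  have h2 := congrArg (toG _ s) hh
  rw [toG_ff, map_mul, toG_of, map_zpow, toG_t, hm, hw] at h2
  have h3 : h = 1 := by
    ext
    simpa using h2
  rw [hh, h3, hm]
  simp

lemma exists_inj (R : Set (FreeGroup (Fin n))) (hR : R.Finite)
    (hq : Function.Surjective q) (hker : q.ker = Subgroup.normalClosure R)
    (hs : ε s = Multiplicative.ofAdd 1) :
    ∃ k, Function.Injective (toG (HH q ε s k) s) := by
  obtain ⟨w, hw⟩ := hq s
  choose κ hκ using eventually_eq q ε s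
  obtain ⟨M, hM⟩ := (hR.image κ).bddAbove
  refine ⟨max M (κ w), ?_⟩
  set k := max M (κ w) with hk
  have htr : ff q ε s k w = t := by
    have := hκ w k (le_max_right _ _) 1 (by simp [ex, hw, hs]) (by simp [hw])
    simpa using this
  have hRk : Subgroup.normalClosure R ≤ (ff q ε s k).ker := by
    apply Subgroup.normalClosure_le_normal
    intro r hr
    have hq1 : q r = 1 := by
      rw [← MonoidHom.mem_ker, hker]; exact Subgroup.subset_normalClosure hr
    have := hκ r k (le_trans (hM ⟨r, hr, rfl⟩) (le_max_left _ _)) 0 (by simp [ex, hq1])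
      (by simp [hq1])
    simpa [MonoidHom.mem_ker] using this
  have ht : (t : E (HH q ε s k) s) ∈ (ff q ε s k).range := ⟨w, htr⟩
  have hgen : ∀ i, of ⟨gen q ε s i, gen_mem q ε s k i⟩ ∈ (ff q ε s k).range := by
    intro i
    have h1 : ff q ε s k (FreeGroup.of i) ∈ (ff q ε s k).range := ⟨_, rfl⟩
    rw [ff_of] at h1
    exact (Subgroup.mul_mem_cancel_right _ (zpow_mem ht _)).1 h1
  have hof : ∀ (g : G) (hg : g ∈ HH q ε s k), of ⟨g, hg⟩ ∈ (ff q ε s k).range := by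
    intro g hg
    induction hg using Subgroup.closure_induction with
    | mem x hx =>
      obtain ⟨⟨i, j⟩, hj, rfl⟩ := hx
      have := conj_gen q ε s k i j hj
      have h2 := mul_mem (mul_mem (zpow_mem ht j) (hgen i)) (zpow_mem ht (-j))
      rw [this] at h2
      exact h2
    | one => exact ⟨1, by rw [map_one]; exact (map_one of).symm⟩
    | mul x y hx hy h1 h2 =>
      have := mul_mem h1 h2
      rw [← map_mul] at this
      exact this
    | inv x hx h1 =>
      have := inv_mem h1
      rw [← map_inv] at this
      exact this
  have hsurj : ∀ y, y ∈ (ff q ε s k).range := by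
    intro y
    induction y using HNNExtension.induction_on with
    | of g => exact hof g.1 g.2
    | t => exact ht
    | mul x y hx hy => exact mul_mem hx hy
    | inv x hx => exact inv_mem hx
  rw [injective_iff_map_eq_one]
  intro y hy
  obtain ⟨v, rfl⟩ := hsurj y
  rw [toG_ff] at hy
  exact hRk (hker ▸ (MonoidHom.mem_ker.2 hy))

lemma main (R : Set (FreeGroup (Fin n))) (hR : R.Finite)
    (hq : Function.Surjective q) (hker : q.ker = Subgroup.normalClosure R)
    (hs : ε s = Multiplicative.ofAdd 1)
    (hlf : ∀ H : Subgroup G, H ≤ ε.ker → H.FG → Finite H) : Finite ε.ker := by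
  obtain ⟨k, hinj⟩ := exists_inj q ε s R hR hq hker hs
  set H := HH q ε s k with hH
  have hfin : Finite H := hlf H (HH_le q ε s hs k) (HH_fg q ε s k)
  have hAB : cA H s = ⊤ ∨ cA H s⁻¹ = ⊤ := by
    by_contra! hcon
    obtain ⟨hA, hB⟩ := hcon
    obtain ⟨h, hh⟩ : ∃ h, h ∉ cA H s := by
      by_contra! hc; exact hA (eq_top_iff.2 fun x _ => hc x)
    obtain ⟨h', hh'⟩ : ∃ h, h ∉ cA H s⁻¹ := by
      by_contra! hc; exact hB (eq_top_iff.2 fun x _ => hc x)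
    set y : E H s := t * of h * t⁻¹ * of h' with hy
    have hyk : toG H s y ∈ ε.ker := by
      have h1 := HH_le q ε s hs k h.2
      have h2 := HH_le q ε s hs k h'.2
      rw [MonoidHom.mem_ker] at h1 h2 ⊢
      simp [hy, toG_of, toG_t, h1, h2]
    have hfz : Finite (Subgroup.zpowers (toG H s y)) :=
      hlf _ (by rwa [Subgroup.zpowers_le]) ⟨{toG H s y}, by simp [Subgroup.zpowers_eq_closure]⟩
    have hfo : IsOfFinOrder (toG H s y) := by
      rwa [← finite_zpowers]
    obtain ⟨m, hm, hm1⟩ := isOfFinOrder_iff_pow_eq_one.1 hfo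
    rw [← map_pow] at hm1
    exact pow_ne_one h h' hh hh' m hm.ne' (hinj (by rw [hm1, map_one]))
  have hc : Nat.card (cA H s) = Nat.card (cA H s⁻¹) := Nat.card_congr (cφ H s).toEquiv
  have hA : cA H s = ⊤ := by
    rcases hAB with h | h
    · exact h
    · apply Subgroup.eq_top_of_card_eq
      rw [hc, h]; simp
  have hB : cA H s⁻¹ = ⊤ := by
    apply Subgroup.eq_top_of_card_eq
    rw [← hc, hA]; simp
  -- every element of `G` is in `H * ⟨s⟩`
  have hcA : ∀ x ∈ H, s * x * s⁻¹ ∈ H := fun x hx =>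
    mem_cA.1 (show (⟨x, hx⟩ : H) ∈ cA H s by rw [hA]; trivial)
  have hcB : ∀ x ∈ H, s⁻¹ * x * s ∈ H := fun x hx => by
    simpa using mem_cA.1 (show (⟨x, hx⟩ : H) ∈ cA H s⁻¹ by rw [hB]; trivial)
  have hcz : ∀ (j : ℤ), ∀ x ∈ H, s ^ j * x * s ^ (-j) ∈ H := by
    intro j
    induction j with
    | zero => intro x hx; simpa using hx
    | succ m ih =>
      intro x hx
      have := hcA _ (ih x hx)
      convert this using 1
      group
    | pred m ih =>
      intro x hx
      have := hcB _ (ih x hx)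
      convert this using 1
      group
  have hdec : ∀ g : G, g * s ^ (-(ex ε g)) ∈ H := by
    intro g
    obtain ⟨w, rfl⟩ := hq g
    induction w using FreeGroup.induction_on with
    | C1 => simp [ex]
    | of i => exact gen_mem q ε s k i
    | inv_of i hi =>
      have := hcz (-(ex ε (q (FreeGroup.of i)))) _ (inv_mem hi)
      convert this using 1
      have : ex ε (q (FreeGroup.of i)⁻¹) = - ex ε (q (FreeGroup.of i)) := by simp [ex]
      rw [this, map_inv]
      group
    | mul a b ha hb =>
      have := mul_mem ha (hcz (ex ε (q a)) _ hb)
      convert this using 1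
      have : ex ε (q (a * b)) = ex ε (q a) + ex ε (q b) := by simp [ex]
      rw [this, map_mul]
      group
  have hle : ε.ker ≤ H := by
    intro g hg
    have := hdec g
    rw [MonoidHom.mem_ker] at hg
    simpa [ex, hg] using this
  exact Finite.of_injective _ (Subgroup.inclusion_injective hle)

end Main

end Stmt13Aux

/-- If `G` is finitely presented and `ε : G → ℤ` is a surjective
homomorphism whose kernel is locally finite (every finitely generated subgroup of the
kernel is finite), then the kernel is finite: every finitely presented
(locally finite)-by-ℤ group is (finite)-by-ℤ. -/
theorem stmt13 {G : Type*} [Group G] (hfp : IsFinitelyPresented G)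
    (ε : G →* Multiplicative ℤ) (hsurj : Function.Surjective ε)
    (hlf : ∀ H : Subgroup G, H ≤ ε.ker → H.FG → Finite H) :
    Finite ε.ker := by
  obtain ⟨n, R, hR, ⟨e⟩⟩ := hfp
  obtain ⟨s, hs⟩ := hsurj (Multiplicative.ofAdd 1)
  refine Stmt13Aux.main (e.symm.toMonoidHom.comp (PresentedGroup.mk R)) ε s R hR ?_ ?_ hs hlf
  · exact e.symm.surjective.comp (PresentedGroup.mk_surjective R)
  · ext x
    rw [MonoidHom.mem_ker]
    simp only [MonoidHom.comp_apply, MulEquiv.toMonoidHom_eq_coe, MonoidHom.coe_coe,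
      EmbeddingLike.map_eq_one_iff]
    exact QuotientGroup.eq_one_iff x
end

section
/- Every finitely generated nilpotent group G is either virtually cyclic or virtually surjects onto ℤ × ℤ: either G has a cyclic subgroup of finite index, or G has a subgroup of finite index admitting a surjective group homomorphism onto ℤ × ℤ. -/
/-- The dichotomy as a predicate. -/
def VirtDich (G : Type*) [Group G] : Prop :=
    (∃ H : Subgroup G, H.index ≠ 0 ∧ IsCyclic H) ∨
    (∃ H : Subgroup G, H.index ≠ 0 ∧
      ∃ f : H →* Multiplicative (ℤ × ℤ), Function.Surjective f)

theorem virtDich_of_comm (C : Type*) [CommGroup C] [Group.FG C] : VirtDich C := by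
  classical
  obtain ⟨ι, j, _, _, p, hp, n, ⟨e⟩⟩ := CommGroup.equiv_free_prod_prod_multiplicative_zmod C
  rcases subsingleton_or_nontrivial j with hj | hj
  · left
    have : ∀ i, NeZero (p i ^ n i) := fun i => ⟨pow_ne_zero _ (hp i).ne_zero⟩
    have : ∀ i, Finite (Multiplicative (ZMod (p i ^ n i))) := fun i =>
      inferInstanceAs (Finite (ZMod (p i ^ n i)))
    let s : C →* ((i : ι) → Multiplicative (ZMod (p i ^ n i))) :=
      (MonoidHom.snd _ _).comp e.toMonoidHom
    let t : C →* (j → Multiplicative ℤ) := (MonoidHom.fst _ _).comp e.toMonoidHom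
    refine ⟨s.ker, ?_, ?_⟩
    · rw [Subgroup.index_ker]
      exact Nat.card_pos.ne'
    · have hc : IsCyclic (j → Multiplicative ℤ) := by
        rcases isEmpty_or_nonempty j with h | ⟨⟨a⟩⟩
        · infer_instance
        · have : Unique j := ⟨⟨a⟩, fun _ => Subsingleton.elim _ _⟩
          exact isCyclic_of_injective (MulEquiv.funUnique j (Multiplicative ℤ)).toMonoidHom
            (MulEquiv.funUnique j (Multiplicative ℤ)).injective
      refine isCyclic_of_injective (t.comp s.ker.subtype) ?_
      rintro ⟨x, hx⟩ ⟨y, hy⟩ h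
      refine Subtype.ext (e.injective (Prod.ext h ?_))
      exact (MonoidHom.mem_ker.1 hx).trans (MonoidHom.mem_ker.1 hy).symm
  · right
    obtain ⟨a, b, hab⟩ := exists_pair_ne j
    refine ⟨⊤, by simp, ?_⟩
    let g : (j → Multiplicative ℤ) →* Multiplicative (ℤ × ℤ) :=
      { toFun := fun x => Multiplicative.ofAdd ((x a).toAdd, (x b).toAdd)
        map_one' := rfl
        map_mul' := fun _ _ => rfl }
    refine ⟨(g.comp ((MonoidHom.fst _ _).comp e.toMonoidHom)).comp (Subgroup.subtype ⊤), ?_⟩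
    intro z
    refine ⟨⟨e.symm (fun i => if i = a then Multiplicative.ofAdd z.toAdd.1
      else Multiplicative.ofAdd z.toAdd.2, 1), trivial⟩, ?_⟩
    simp [g, hab.symm]

theorem VirtDich.of_subgroup {G : Type*} [Group G] (K : Subgroup G) (hK : K.index ≠ 0)
    (h : VirtDich K) : VirtDich G := by
  rcases h with ⟨H, hH, hc⟩ | ⟨H, hH, f, hf⟩
  · left
    refine ⟨H.map K.subtype, ?_, ?_⟩
    · rw [Subgroup.index_map_subtype]; exact mul_ne_zero hH hK
    · let e := H.equivMapOfInjective K.subtype K.subtype_injective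
      exact isCyclic_of_surjective e.toMonoidHom e.surjective
  · right
    refine ⟨H.map K.subtype, ?_, ?_⟩
    · rw [Subgroup.index_map_subtype]; exact mul_ne_zero hH hK
    · let e := H.equivMapOfInjective K.subtype K.subtype_injective
      exact ⟨f.comp e.symm.toMonoidHom, hf.comp e.symm.surjective⟩

theorem virtDich_step (G : Type*) [Group G] [Group.FG G]
    (h : VirtDich (G ⧸ Subgroup.center G)) : VirtDich G := by
  have hs := QuotientGroup.mk'_surjective (Subgroup.center G)
  rcases h with ⟨H, hH, hc⟩ | ⟨H, hH, f, hf⟩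
  · have hi : (H.comap (QuotientGroup.mk' (Subgroup.center G))).index ≠ 0 := by
      rwa [Subgroup.index_comap_of_surjective _ hs]
    refine VirtDich.of_subgroup _ hi ?_
    have : (H.comap (QuotientGroup.mk' (Subgroup.center G))).FiniteIndex := ⟨hi⟩
    have hfg : Group.FG (H.comap (QuotientGroup.mk' (Subgroup.center G))) := inferInstance
    letI := commGroupOfCyclicCenterQuotient
      ((QuotientGroup.mk' (Subgroup.center G)).subgroupComap H) (by
        rintro ⟨x, hx⟩ hk
        have h1 : (QuotientGroup.mk' (Subgroup.center G)) x = 1 :=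
          congrArg Subtype.val (MonoidHom.mem_ker.1 hk)
        have h2 : x ∈ Subgroup.center G := (QuotientGroup.eq_one_iff x).1 h1
        rw [Subgroup.mem_center_iff] at h2 ⊢
        exact fun g => Subtype.ext (h2 g))
    exact virtDich_of_comm _
  · right
    refine ⟨H.comap (QuotientGroup.mk' (Subgroup.center G)), ?_, 
      f.comp ((QuotientGroup.mk' (Subgroup.center G)).subgroupComap H), 
      hf.comp (MonoidHom.subgroupComap_surjective_of_surjective _ H hs)⟩
    rwa [Subgroup.index_comap_of_surjective _ hs]

theorem virtDich_main (G : Type*) [Group G] [Group.IsNilpotent G] : Group.FG G → VirtDich G := by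
  refine Group.nilpotent_center_quotient_ind
    (P := fun (G : Type _) [Group G] [Group.IsNilpotent G] => Group.FG G → VirtDich G) G ?_ ?_
  · intro G _ _ _
    exact Or.inl ⟨⊤, by simp, inferInstance⟩
  · intro G _ _ ih _
    exact virtDich_step G (ih inferInstance)

/-- Every finitely generated nilpotent group is either virtually
cyclic (it has a cyclic subgroup of finite index) or virtually surjects onto `ℤ × ℤ`
(it has a finite-index subgroup admitting a surjective homomorphism onto `ℤ × ℤ`). -/
theorem stmt14 {G : Type*} [Group G] [Group.FG G] [Group.IsNilpotent G] :
    (∃ H : Subgroup G, H.index ≠ 0 ∧ IsCyclic H) ∨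
    (∃ H : Subgroup G, H.index ≠ 0 ∧
      ∃ f : H →* Multiplicative (ℤ × ℤ), Function.Surjective f) := by
  exact virtDich_main G inferInstance
end

section
/- Let Γ be a connected, locally finite simple graph with infinitely many vertices V. Then one can choose for every vertex v a proper ray r_v : ℕ → V starting at v — that is, r_v 0 = v, consecutive vertices r_v n and r_v (n+1) are adjacent in Γ, and for every finite K ⊆ V the set {n | r_v n ∈ K} is finite — such that the family is locally finite: for every finite K ⊆ V, the set of vertices v for which the image of r_v meets K is finite. -/
open SimpleGraph in
lemma ray_exists {V : Type*} (H : SimpleGraph V) (hf : ∀ v, (H.neighborSet v).Finite)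
    (v : V) (hv : {u | H.Reachable v u}.Infinite) :
    ∃ r : ℕ → V, r 0 = v ∧ (∀ n, H.Adj (r n) (r (n + 1))) ∧ Function.Injective r := by
  let S : V → Set V := fun w => {u | H.Reachable w u ∧ H.dist v u = H.dist v w + H.dist w u}
  let P : V → Prop := fun w => H.Reachable v w ∧ (S w).Infinite
  have step : ∀ w : {w // P w}, ∃ w' : {w // P w}, H.Adj w.1 w'.1 ∧
      H.dist v w'.1 = H.dist v w.1 + 1 := by
    rintro ⟨w, hvw, hw⟩
    by_contra hcon
    push Not at hcon
    apply hw
    let N : Set V := {x | H.Adj w x ∧ H.dist v x = H.dist v w + 1}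
    have hN : N.Finite := (hf w).subset (fun x hx => hx.1)
    have hfin : ∀ x ∈ N, (S x).Finite := by
      intro x hx
      by_contra hi
      exact hcon ⟨x, hvw.trans hx.1.reachable, hi⟩ hx.1 hx.2
    refine ((Set.finite_singleton w).union (hN.biUnion hfin)).subset ?_
    rintro u ⟨hwu, hd⟩
    obtain ⟨p, hp⟩ := hwu.exists_walk_length_eq_dist
    cases p with
    | nil => left; rfl
    | @cons _ x _ h q =>
      right
      rw [Walk.length_cons] at hp
      have h1 : H.dist x u ≤ q.length := dist_le q
      obtain ⟨a, ha⟩ := hvw.exists_walk_length_eq_dist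
      have h2 : H.dist v x ≤ H.dist v w + 1 := by
        have := dist_le (a.append (Walk.cons h Walk.nil))
        simp at this
        omega
      have h3 : H.dist v u ≤ H.dist v x + H.dist x u := by
        obtain ⟨b, hb⟩ := (hvw.trans h.reachable).exists_walk_length_eq_dist
        obtain ⟨c, hc⟩ := q.reachable.exists_walk_length_eq_dist
        have := dist_le (b.append c)
        simp at this
        omega
      simp only [Set.mem_iUnion]
      exact ⟨x, ⟨h, by omega⟩, q.reachable, by omega⟩
  choose f hf1 hf2 using step
  have hP : P v := by
    refine ⟨Reachable.refl _, hv.mono ?_⟩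
    intro u hu
    exact ⟨hu, by simp⟩
  let s : ℕ → {w // P w} := fun n => f^[n] ⟨v, hP⟩
  have hs : ∀ n, s (n+1) = f (s n) := fun n => Function.iterate_succ_apply' _ _ _
  have hd : ∀ n, H.dist v (s n).1 = n := by
    intro n
    induction n with
    | zero => simp [s]
    | succ k ih => rw [hs, hf2, ih]
  refine ⟨fun n => (s n).1, rfl, fun n => ?_, fun a b hab => ?_⟩
  · simp only [hs]; exact hf1 _
  · have := congrArg (H.dist v) hab
    simpa [hd] using this

/-- `Γ` with all edges touching `B` removed. -/
def cutGraph {V : Type*} (Γ : SimpleGraph V) (B : Set V) : SimpleGraph V where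
  Adj a b := Γ.Adj a b ∧ a ∉ B ∧ b ∉ B
  symm := ⟨fun _ _ h => ⟨h.1.symm, h.2.2, h.2.1⟩⟩
  loopless := ⟨fun _ h => Γ.loopless.irrefl _ h.1⟩

lemma cut_fin {V : Type*} (Γ : SimpleGraph V) (hconn : Γ.Connected)
    (hf : ∀ v, (Γ.neighborSet v).Finite) (B : Set V) (hB : B.Finite) (o : V) (ho : o ∈ B) :
    {v | {u | (cutGraph Γ B).Reachable v u}.Finite}.Finite := by
  let N : Set V := ⋃ b ∈ B, Γ.neighborSet b
  have hN : N.Finite := hB.biUnion (fun b _ => hf b)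
  let N' : Set V := {x | x ∈ N ∧ {u | (cutGraph Γ B).Reachable x u}.Finite}
  have hN' : N'.Finite := hN.subset (fun x hx => hx.1)
  have key : ∀ v, v ∈ B ∨ ∃ x ∈ N, (cutGraph Γ B).Reachable x v := by
    intro v
    obtain ⟨p⟩ := hconn.preconnected v o
    induction p with
    | nil => exact Or.inl ho
    | @cons a b c h q ih =>
      by_cases ha : a ∈ B
      · exact Or.inl ha
      right
      by_cases hb : b ∈ B
      · refine ⟨a, ?_, SimpleGraph.Reachable.refl _⟩
        simp only [N, Set.mem_iUnion]
        exact ⟨b, hb, h.symm⟩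
      · rcases ih ho with h' | ⟨x, hx, hr⟩
        · exact absurd h' hb
        · refine ⟨x, hx, hr.trans ?_⟩
          have : (cutGraph Γ B).Adj b a := ⟨h.symm, hb, ha⟩
          exact this.reachable
  refine (hB.union (hN'.biUnion (t := fun x => {u | (cutGraph Γ B).Reachable x u})
    (fun x hx => hx.2))).subset ?_
  intro v hv
  rcases key v with h | ⟨x, hx, hr⟩
  · exact Or.inl h
  · right
    simp only [Set.mem_iUnion]
    refine ⟨x, ⟨hx, ?_⟩, hr⟩
    exact Set.Finite.subset hv (fun u hu => hr.symm.trans hu)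

lemma cut_mem {V : Type*} (Γ : SimpleGraph V) (B : Set V) (v : V) (hv : v ∈ B) :
    {u | (cutGraph Γ B).Reachable v u}.Finite := by
  refine (Set.finite_singleton v).subset ?_
  rintro u ⟨p⟩
  cases p with
  | nil => rfl
  | cons h q => exact absurd hv h.2.1

/-- In a connected, locally finite graph with infinitely many
vertices, one can choose for every vertex `v` a proper ray `r v` starting at `v`, such
that the family is locally finite: every finite set of vertices is met by the images of
only finitely many of the rays. -/
theorem stmt19 {V : Type*} [Infinite V] (Γ : SimpleGraph V)
    (hconn : Γ.Connected) (hlf : Γ.LocallyFinite) :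
    ∃ r : V → ℕ → V,
      (∀ v, r v 0 = v) ∧
      (∀ v n, Γ.Adj (r v n) (r v (n + 1))) ∧
      (∀ (v : V) (K : Set V), K.Finite → {n | r v n ∈ K}.Finite) ∧
      (∀ K : Set V, K.Finite → {v | ∃ n, r v n ∈ K}.Finite) := by
  have hf : ∀ v, (Γ.neighborSet v).Finite := fun v => by
    have := hlf v
    exact Set.toFinite _
  obtain ⟨o⟩ := hconn.nonempty
  obtain ⟨B, hB0, hBs⟩ : ∃ B : ℕ → Set V, B 0 = ∅ ∧
      ∀ n, B (n+1) = {o} ∪ (B n ∪ ⋃ b ∈ B n, Γ.neighborSet b) :=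
    ⟨fun n => Nat.rec ∅ (fun _ S => {o} ∪ (S ∪ ⋃ b ∈ S, Γ.neighborSet b)) n,
      rfl, fun _ => rfl⟩
  have hBfin : ∀ n, (B n).Finite := by
    intro n
    induction n with
    | zero => rw [hB0]; exact Set.finite_empty
    | succ k ih =>
      rw [hBs]
      exact (Set.finite_singleton o).union (ih.union (ih.biUnion (fun b _ => hf b)))
  have hmono : Monotone B := monotone_nat_of_le_succ (fun n x hx => by
    rw [hBs]; exact Or.inr (Or.inl hx))
  have ho : ∀ n, o ∈ B (n+1) := fun n => by rw [hBs]; exact Or.inl rfl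
  have hex : ∀ v, ∃ n, v ∈ B n := by
    intro v
    obtain ⟨p⟩ := hconn.preconnected v o
    have ho1 : ∃ n, o ∈ B n := ⟨1, ho 0⟩
    induction p with
    | nil => exact ho1
    | @cons a b c h q ih =>
      obtain ⟨n, hn⟩ := ih hBs ho ho1
      refine ⟨n+1, ?_⟩
      rw [hBs]
      right; right
      simp only [Set.mem_iUnion]
      exact ⟨b, hn, h.symm⟩
  have hlev : ∀ v, ∃ N, {u | (cutGraph Γ (B N)).Reachable v u}.Infinite ∧
      ∀ m, N < m → {u | (cutGraph Γ (B m)).Reachable v u}.Finite := by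
    intro v
    let T : Set ℕ := {n | {u | (cutGraph Γ (B n)).Reachable v u}.Infinite}
    have h0 : (0:ℕ) ∈ T := by
      have h1 : cutGraph Γ (B 0) = Γ := by
        ext a b
        simp [cutGraph, hB0]
      have h2 : {u | (cutGraph Γ (B 0)).Reachable v u} = Set.univ := by
        rw [h1]
        exact Set.eq_univ_of_forall (fun u => hconn.preconnected v u)
      change Set.Infinite _
      rw [h2]
      exact Set.infinite_univ
    have hbdd : BddAbove T := by
      obtain ⟨n, hn⟩ := hex v
      refine ⟨n, fun m hm => ?_⟩
      by_contra hlt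
      exact hm (cut_mem Γ _ v (hmono (by omega) hn))
    refine ⟨sSup T, Nat.sSup_mem ⟨0, h0⟩ hbdd, fun m hm => ?_⟩
    by_contra hi
    exact absurd (le_csSup hbdd (show m ∈ T from hi)) (by omega)
  choose N hN1 hN2 using hlev
  have hray := fun v => ray_exists (cutGraph Γ (B (N v)))
    (fun w => (hf w).subset (fun x hx => hx.1)) v (hN1 v)
  choose r hr0 hr1 hr2 using hray
  refine ⟨r, hr0, fun v n => (hr1 v n).1, fun v K hK => ?_, fun K hK => ?_⟩
  · exact hK.preimage (hr2 v).injOn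
  · have hKm : ∃ m, K ⊆ B m := by
      choose g hg using hex
      obtain ⟨m, hm⟩ := (hK.image g).bddAbove
      exact ⟨m, fun x hx => hmono (hm ⟨x, hx, rfl⟩) (hg x)⟩
    obtain ⟨m, hm⟩ := hKm
    refine (cut_fin Γ hconn hf (B (m+1)) (hBfin (m+1)) o (ho m)).subset ?_
    rintro v ⟨n, hn⟩
    apply hN2
    by_contra hlt
    exact (hr1 v n).2.1 (hmono (by omega) (hm hn))
end
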